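/- arXiv:1106.0082 — 2 statements merged into one kernel-verified Lean document; each statement's English description precedes it below -/
import Mathlib

section
/- Let k ∈ ℤ≥0 and let F be a linearly closed differential field of characteristic zero with constants C. Let K be an ℓ×ℓ matrix differential operator over F of order N with invertible leading coefficient. Then the set of skewsymmetric k-differential operators P on F^ℓ whose entries are polynomials of degree at most N−1 in each of the variables λ_1,…,λ_k and which satisfy ⟨K∘P⟩⁻ = 0 is a vector space over C of dimension binom(Nℓ, k+1). -/
/-- A derivation on a field: an additive map satisfying the Leibniz rule. -/
structure IsDerivation {F : Type*} [Field F] (d : F → F) : Prop where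
  map_add : ∀ a b : F, d (a + b) = d a + d b
  leibniz : ∀ a b : F, d (a * b) = d a * b + a * d b

/-- A differential field `(F, d)` is linearly closed if every linear differential equation
`a_M d^M u + ⋯ + a_1 d u + a_0 u = b` with `a_M ≠ 0` has a solution in `F`,
and has a nonzero solution for `b = 0`, provided that `M ≥ 1`. -/
def LinearlyClosed {F : Type*} [Field F] (d : F → F) : Prop :=
  ∀ (M : ℕ) (a : ℕ → F), a M ≠ 0 →
    (∀ b : F, ∃ u : F, ∑ n ∈ Finset.range (M + 1), a n * d^[n] u = b) ∧
    (1 ≤ M → ∃ u : F, u ≠ 0 ∧ ∑ n ∈ Finset.range (M + 1), a n * d^[n] u = 0)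

/-- The derivation `∂̂` of `F[λ_1,…,λ_k]` acting as `d` on coefficients and annihilating
the variables. -/
noncomputable def coeffDer {F : Type*} [Field F] (d : F → F) {k : ℕ}
    (Q : MvPolynomial (Fin k) F) : MvPolynomial (Fin k) F :=
  ∑ m ∈ Q.support, (MvPolynomial.monomial m) (d (MvPolynomial.coeff m Q))

/-- `Λ₀(Q) = −(λ_1+⋯+λ_k)·Q − ∂̂(Q)`. -/
noncomputable def lamZero {F : Type*} [Field F] (d : F → F) {k : ℕ} :
    MvPolynomial (Fin k) F → MvPolynomial (Fin k) F :=
  fun Q => -((∑ a : Fin k, MvPolynomial.X a) * Q) - coeffDer d Q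

/-- `E(Q) = (λ_1+⋯+λ_k)·Q + ∂̂(Q)`. -/
noncomputable def eOp {F : Type*} [Field F] (d : F → F) {k : ℕ} :
    MvPolynomial (Fin k) F → MvPolynomial (Fin k) F :=
  fun Q => (∑ a : Fin k, MvPolynomial.X a) * Q + coeffDer d Q

/-- A `k`-differential operator on `F^ℓ` is skewsymmetric if the simultaneous action of
`S_k` on the indices `i_1,…,i_k` and the variables `λ_1,…,λ_k` is by the sign
character. -/
def IsSkewsym {F : Type*} [Field F] {k l : ℕ}
    (P : (Fin (k + 1) → Fin l) → MvPolynomial (Fin k) F) : Prop :=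
  ∀ (σ : Equiv.Perm (Fin k)) (i : Fin (k + 1) → Fin l),
    MvPolynomial.rename σ (P (Fin.cons (i 0) (fun a => i (Fin.succ (σ a)))))
      = (Equiv.Perm.sign σ : ℤ) • P i

/-- The operation `P ↦ P^{τ_α}`: expand `P_{i_α,i_1,…,i_0,…,i_k} = Σ_n p_n λ^n` and
replace the power `λ_α^{n_α}` by an application of `Λ₀^{n_α}`. -/
noncomputable def tauAct {F : Type*} [Field F] (d : F → F) {k l : ℕ} (α : Fin k)
    (P : (Fin (k + 1) → Fin l) → MvPolynomial (Fin k) F)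
    (i : Fin (k + 1) → Fin l) : MvPolynomial (Fin k) F :=
  ∑ m ∈ (P (fun j => i (Equiv.swap 0 α.succ j))).support,
    (lamZero d)^[m α]
      ((MvPolynomial.monomial (Finsupp.erase α m))
        (MvPolynomial.coeff m (P (fun j => i (Equiv.swap 0 α.succ j)))))

/-- The total skewsymmetrization `⟨P⟩⁻ = (1/(k+1)) (P − Σ_{α=1}^k P^{τ_α})` of a
skewsymmetric `k`-differential operator. -/
noncomputable def totSkew {F : Type*} [Field F] (d : F → F) {k l : ℕ}
    (P : (Fin (k + 1) → Fin l) → MvPolynomial (Fin k) F) :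
    (Fin (k + 1) → Fin l) → MvPolynomial (Fin k) F :=
  fun i => (((k : F) + 1)⁻¹) • (P i - ∑ α : Fin k, tauAct d α P i)

/-- `(K∘P)_{i_0,i_1,…,i_k} = Σ_j Σ_{n=0}^N K_{i_0 j,n} · E^n (P_{j,i_1,…,i_k})`. -/
noncomputable def kCirc {F : Type*} [Field F] (d : F → F) {k l : ℕ} (N : ℕ)
    (K : Fin l → Fin l → ℕ → F)
    (P : (Fin (k + 1) → Fin l) → MvPolynomial (Fin k) F) :
    (Fin (k + 1) → Fin l) → MvPolynomial (Fin k) F :=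
  fun i => ∑ j : Fin l, ∑ n ∈ Finset.range (N + 1),
    MvPolynomial.C (K (i 0) j n) * (eOp d)^[n] (P (Function.update i 0 j))


namespace IsDerivation
variable {F : Type*} [Field F] {d : F → F}
theorem map_zero (hd : IsDerivation d) : d 0 = 0 := by
  have := hd.map_add 0 0
  simpa using this
theorem map_one (hd : IsDerivation d) : d 1 = 0 := by
  have := hd.leibniz 1 1
  simpa using this
theorem map_neg (hd : IsDerivation d) (a : F) : d (-a) = - d a := by
  have := hd.map_add a (-a)
  rw [add_neg_cancel, hd.map_zero] at this
  exact (neg_eq_of_add_eq_zero_right this.symm).symm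
theorem map_sum (hd : IsDerivation d) {ι : Type*} (s : Finset ι) (f : ι → F) :
    d (∑ i ∈ s, f i) = ∑ i ∈ s, d (f i) := by
  classical
  induction s using Finset.induction_on with
  | empty => simp [hd.map_zero]
  | insert a s ha ih => rw [Finset.sum_insert ha, Finset.sum_insert ha, hd.map_add, ih]
end IsDerivation

/-- A connection on a vector space over a differential field. -/
structure IsConn {F : Type*} [Field F] (d : F → F) {V : Type*} [AddCommGroup V] [Module F V]
    (D : V → V) : Prop where
  add : ∀ v w, D (v + w) = D v + D w
  smul : ∀ (a : F) v, D (a • v) = d a • v + a • D v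

namespace IsConn
variable {F : Type*} [Field F] {d : F → F} {V : Type*} [AddCommGroup V] [Module F V] {D : V → V}

theorem zero (h : IsConn d D) : D 0 = 0 := by
  have := h.add 0 0
  simpa using this

theorem sum (h : IsConn d D) {ι : Type*} (s : Finset ι) (f : ι → V) :
    D (∑ i ∈ s, f i) = ∑ i ∈ s, D (f i) := by
  classical
  induction s using Finset.induction_on with
  | empty => simp [h.zero]
  | insert a s ha ih => rw [Finset.sum_insert ha, Finset.sum_insert ha, h.add, ih]

theorem exists_functional (hd : IsDerivation d) (hlc : LinearlyClosed d) (n : ℕ) :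
    ∀ (V : Type*) [AddCommGroup V] [Module F V] [FiniteDimensional F V] (D : V → V),
      IsConn d D → Module.finrank F V = n + 1 →
      ∃ φ : V →ₗ[F] F, φ ≠ 0 ∧ ∀ v, φ (D v) = d (φ v) := by
  induction n using Nat.strong_induction_on with
  | _ n ih =>
  intro V _ _ _ D hD hn
  classical
  have : Nontrivial V := Module.nontrivial_of_finrank_pos (R := F) (by omega)
  obtain ⟨v, hv⟩ := exists_ne (0 : V)
  -- greatest r with independence
  let p : ℕ → Prop := fun r => LinearIndependent F (fun i : Fin r => D^[i] v)
  have hbound : ∀ r, p r → r ≤ n + 1 := by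
    intro r hr
    have := hr.fintype_card_le_finrank
    simpa [hn] using this
  have hp1 : p 1 := by
    simp only [p]
    rw [linearIndependent_unique_iff]
    simpa using hv
  obtain ⟨r, hr, hr1, hnr⟩ : ∃ r, p r ∧ 1 ≤ r ∧ ¬ p (r + 1) := by
    by_contra hcon
    push Not at hcon
    have hall : ∀ r, 1 ≤ r → p r := by
      intro r h1
      induction r, h1 using Nat.le_induction with
      | base => exact hp1
      | succ r h1 ih => exact hcon r ih h1
    have := hbound (n + 2) (hall _ (by omega))
    omega
  set U := Submodule.span F (Set.range (fun i : Fin r => D^[i] v)) with hU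
  have hmem : D^[r] v ∈ U := by
    by_contra hcon
    apply hnr
    simp only [p]
    rw [linearIndependent_finSucc']
    refine ⟨?_, ?_⟩
    · exact hr
    · simpa [Fin.init_def] using hcon
  have hgen : ∀ i, i ≤ r → D^[i] v ∈ U := by
    intro i hi
    rcases hi.lt_or_eq with h | h
    · exact Submodule.subset_span ⟨⟨i, h⟩, rfl⟩
    · rw [h]; exact hmem
  have hstab : ∀ u ∈ U, D u ∈ U := by
    intro u hu
    induction hu using Submodule.span_induction with
    | mem x hx =>
      obtain ⟨i, rfl⟩ := hx
      have := hgen (i + 1) i.2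
      rwa [Function.iterate_succ_apply'] at this
    | zero => rw [hD.zero]; exact U.zero_mem
    | add x y _ _ hx hy => rw [hD.add]; exact U.add_mem hx hy
    | smul a x hx' hx => rw [hD.smul]; exact U.add_mem (U.smul_mem _ hx') (U.smul_mem _ hx)
  by_cases htop : U = ⊤
  · -- cyclic case
    let b : Module.Basis (Fin r) F V := Module.Basis.mk hr (by rw [← hU, htop])
    have hb : ∀ i : Fin r, b i = D^[i] v := fun i => by simp [b]
    let c : Fin r → F := fun i => b.repr (D^[r] v) i
    have hc : D^[r] v = ∑ i, c i • D^[i] v := by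
      conv_lhs => rw [← b.sum_repr (D^[r] v)]
      simp only [hb, c]
    let a : ℕ → F := fun i => if h : i < r then - c ⟨i, h⟩ else 1
    obtain ⟨y, hy0, hy⟩ := (hlc r a (by simp [a])).2 hr1
    have hy' : d^[r] y = ∑ i : Fin r, c i * d^[i] y := by
      rw [Finset.sum_range_succ, Finset.sum_range] at hy
      simp [a] at hy
      linear_combination hy
    let φ : V →ₗ[F] F := b.constr F (fun i => d^[i] y)
    have hφb : ∀ i : Fin r, φ (D^[i] v) = d^[i] y := by
      intro i
      rw [← hb]; simp [φ]
    have hφ : ∀ i, i ≤ r → φ (D^[i] v) = d^[i] y := by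
      intro i hi
      rcases hi.lt_or_eq with h | h
      · exact hφb ⟨i, h⟩
      · subst h
        rw [hc, hy', map_sum]
        simp [hφb]
    refine ⟨φ, ?_, ?_⟩
    · intro h0
      have := hφ 0 (by omega)
      rw [h0] at this
      simp at this
      exact hy0 this.symm
    · intro x
      rw [← b.sum_repr x, hD.sum, map_sum, map_sum, hd.map_sum]
      refine Finset.sum_congr rfl fun i _ => ?_
      rw [hD.smul, hb, map_add, map_smul, map_smul, map_smul, ← Function.iterate_succ_apply' D,
        hφ _ i.2, hφb]
      simp only [smul_eq_mul, hd.leibniz, Function.iterate_succ_apply']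
  · -- quotient
    let D' : V ⧸ U → V ⧸ U := fun q => Submodule.Quotient.mk (D q.out)
    have hsub : ∀ x y, D (x - y) = D x - D y := by
      intro x y
      have := hD.add (x - y) y
      rw [sub_add_cancel] at this
      rw [this]; simp
    have hD' : ∀ x : V, D' (Submodule.Quotient.mk x) = Submodule.Quotient.mk (D x) := by
      intro x
      simp only [D']
      rw [Submodule.Quotient.eq, ← hsub]
      apply hstab
      rw [← Submodule.Quotient.eq]
      exact Quotient.out_eq _
    have hconn : IsConn d D' := by
      constructor
      · intro q1 q2
        induction q1 using Submodule.Quotient.induction_on with | _ x =>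
        induction q2 using Submodule.Quotient.induction_on with | _ y =>
        rw [← Submodule.Quotient.mk_add, hD', hD', hD', hD.add, Submodule.Quotient.mk_add]
      · intro a q
        induction q using Submodule.Quotient.induction_on with | _ x =>
        rw [← Submodule.Quotient.mk_smul, hD', hD', hD.smul]; rfl
    have h1 : Module.finrank F (V ⧸ U) + Module.finrank F U = n + 1 := by
      rw [← hn]; exact Submodule.finrank_quotient_add_finrank U
    have h2 : Module.finrank F U = r := by
      rw [hU, finrank_span_eq_card hr]; simp
    have h3 : Module.finrank F U < n + 1 := by
      rw [← hn]; exact Submodule.finrank_lt htop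
    obtain ⟨φ, hφ0, hφ⟩ := ih (n - r) (by omega) (V ⧸ U) D' hconn (by omega)
    refine ⟨φ.comp U.mkQ, ?_, ?_⟩
    · intro h
      apply hφ0
      ext x
      exact LinearMap.congr_fun h x
    · intro x
      simp only [LinearMap.comp_apply, Submodule.mkQ_apply]
      rw [← hD', hφ]

theorem exists_basis (hd : IsDerivation d) (hlc : LinearlyClosed d) (n : ℕ) :
    ∀ (V : Type*) [AddCommGroup V] [Module F V] [FiniteDimensional F V] (D : V → V),
      IsConn d D → Module.finrank F V = n →
      ∃ b : Module.Basis (Fin n) F V, ∀ i, D (b i) = 0 := by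
  induction n with
  | zero =>
    intro V _ _ _ D hD hn
    exact ⟨Module.finBasisOfFinrankEq F V hn, fun i => i.elim0⟩
  | succ n ih =>
    intro V _ _ _ D hD hn
    obtain ⟨φ, hφ0, hφ⟩ := exists_functional hd hlc n V D hD hn
    have hsurj : Function.Surjective φ := LinearMap.surjective hφ0
    have hker : Module.finrank F (LinearMap.ker φ) = n := by
      have := LinearMap.finrank_range_add_finrank_ker φ
      rw [LinearMap.range_eq_top.mpr hsurj, finrank_top, Module.finrank_self] at this
      omega
    have hst : ∀ x ∈ LinearMap.ker φ, D x ∈ LinearMap.ker φ := by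
      intro x hx
      rw [LinearMap.mem_ker] at hx ⊢
      rw [hφ, hx, hd.map_zero]
    obtain ⟨b, hb⟩ := ih (LinearMap.ker φ) (fun x => ⟨D x, hst x x.2⟩)
      ⟨fun v w => Subtype.ext (hD.add v w), fun a v => Subtype.ext (hD.smul a v)⟩ hker
    have hb' : ∀ i, D (b i : V) = 0 := fun i => congrArg Subtype.val (hb i)
    obtain ⟨w, hw⟩ := hsurj 1
    have hDw : D w ∈ LinearMap.ker φ := by rw [LinearMap.mem_ker, hφ, hw, hd.map_one]
    have hant : ∀ a : F, ∃ y, d y = a := by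
      intro a
      obtain ⟨y, hy⟩ := (hlc 1 (fun i => if i = 1 then 1 else 0) (by simp)).1 a
      refine ⟨y, ?_⟩
      simpa [Finset.sum_range_succ] using hy
    choose y hy using fun i => hant (- b.repr ⟨D w, hDw⟩ i)
    let w' : V := w + ∑ i, y i • (b i : V)
    have hw' : D w' = 0 := by
      have h1 : D w = ∑ i, b.repr ⟨D w, hDw⟩ i • (b i : V) := by
        have := congrArg Subtype.val (b.sum_repr ⟨D w, hDw⟩)
        simp only [Submodule.coe_sum, Submodule.coe_smul] at this
        exact this.symm
      simp only [w']
      rw [hD.add, hD.sum]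
      simp only [hD.smul, hb', hy, smul_zero, add_zero, neg_smul, Finset.sum_neg_distrib]
      rw [← h1]; simp
    have hφw : φ w' = 1 := by
      simp only [w', map_add, map_sum, map_smul, hw]
      have : ∀ i, φ (b i : V) = 0 := fun i => (b i).2
      simp [this]
    refine ⟨Module.Basis.mkFinCons w' b ?_ ?_, ?_⟩
    · intro c x hx h
      have := congrArg φ h
      rw [LinearMap.mem_ker] at hx
      simpa [hφw, hx] using this
    · intro z
      refine ⟨- φ z, ?_⟩
      rw [LinearMap.mem_ker]; simp [hφw]
    · intro i
      rw [Module.Basis.coe_mkFinCons]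
      refine Fin.cases ?_ (fun j => ?_) i
      · simpa using hw'
      · simpa using hb' j

theorem rank_ker (hd : IsDerivation d) (hlc : LinearlyClosed d)
    (C : Subfield F) (hC : ∀ x : F, x ∈ C ↔ d x = 0)
    (V : Type*) [AddCommGroup V] [Module F V] [FiniteDimensional F V]
    (D : V → V)
    (hD : IsConn d D) (H : Submodule C V) (hH : ∀ x, x ∈ H ↔ D x = 0) :
    Module.rank C H = (Module.finrank F V : Cardinal) := by
  obtain ⟨b, hb⟩ := exists_basis hd hlc _ V D hD rfl
  let b' : Fin (Module.finrank F V) → H := fun i => ⟨b i, (hH _).2 (hb i)⟩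
  have hli : LinearIndependent C b' := by
    have h1 : LinearIndependent C b := by
      rw [Fintype.linearIndependent_iff]
      intro g hg i
      have h2 := Fintype.linearIndependent_iff.1 b.linearIndependent (fun i => (g i : F))
        (by simpa only [Subfield.smul_def] using hg) i
      exact Subtype.ext h2
    exact LinearIndependent.of_comp H.subtype h1
  have hsp : ⊤ ≤ Submodule.span C (Set.range b') := by
    rintro ⟨x, hx⟩ -
    rw [hH] at hx
    have hcoef : ∀ i, d (b.repr x i) = 0 := by
      have h1 : D x = ∑ i, d (b.repr x i) • b i := by
        conv_lhs => rw [← b.sum_repr x]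
        rw [hD.sum]
        simp [hD.smul, hb]
      intro i
      have h2 := congrArg (fun z => b.repr z i) (h1.symm.trans hx)
      simpa [Finsupp.single_apply] using h2
    have : (⟨x, (hH x).2 hx⟩ : H) = ∑ i, (⟨b.repr x i, (hC _).2 (hcoef i)⟩ : C) • b' i := by
      apply Subtype.ext
      simp only [b', Submodule.coe_sum, Submodule.coe_smul]
      conv_lhs => rw [← b.sum_repr x]
      refine Finset.sum_congr rfl fun i _ => ?_
      rw [Subfield.smul_def]
    rw [this]
    exact Submodule.sum_mem _ fun i _ => Submodule.smul_mem _ _ (Submodule.subset_span ⟨i, rfl⟩)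
  have := rank_eq_card_basis (Module.Basis.mk hli hsp)
  simpa using this

end IsConn

namespace KD
open MvPolynomial

section basic
variable {F : Type*} [Field F] {d : F → F} {k : ℕ}

theorem coeff_coeffDer (hd : IsDerivation d) (m : Fin k →₀ ℕ) (Q : MvPolynomial (Fin k) F) :
    coeff m (coeffDer d Q) = d (coeff m Q) := by
  classical
  unfold coeffDer
  rw [coeff_sum]
  simp only [coeff_monomial]
  rw [Finset.sum_ite_eq']
  split_ifs with h
  · rfl
  · rw [notMem_support_iff.1 h, hd.map_zero]

theorem coeffDer_add (hd : IsDerivation d) (P Q : MvPolynomial (Fin k) F) :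
    coeffDer d (P + Q) = coeffDer d P + coeffDer d Q := by
  ext m; simp [coeff_coeffDer hd, hd.map_add]

theorem coeffDer_smul (hd : IsDerivation d) (a : F) (Q : MvPolynomial (Fin k) F) :
    coeffDer d (a • Q) = d a • Q + a • coeffDer d Q := by
  ext m; simp [coeff_coeffDer hd, hd.leibniz]

theorem coeff_rename_equiv {s t : Type*} (e : s ≃ t) (Q : MvPolynomial s F) (m : t →₀ ℕ) :
    coeff m (rename e Q) = coeff (m.equivMapDomain e.symm) Q := by
  have h : m = (m.equivMapDomain e.symm).mapDomain e := by
    rw [← Finsupp.equivMapDomain_eq_mapDomain, ← Finsupp.equivMapDomain_trans]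
    simp
  conv_lhs => rw [h]
  rw [coeff_rename_mapDomain _ e.injective]

theorem coeffDer_rename (hd : IsDerivation d) (e : Equiv.Perm (Fin k)) (Q : MvPolynomial (Fin k) F) :
    coeffDer d (rename e Q) = rename e (coeffDer d Q) := by
  ext m; simp [coeff_coeffDer hd, coeff_rename_equiv]

theorem eOp_add (hd : IsDerivation d) (P Q : MvPolynomial (Fin k) F) :
    eOp d (P + Q) = eOp d P + eOp d Q := by
  simp only [eOp, coeffDer_add hd]; ring

theorem eOp_smul (hd : IsDerivation d) (a : F) (Q : MvPolynomial (Fin k) F) :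
    eOp d (a • Q) = d a • Q + a • eOp d Q := by
  simp only [eOp, coeffDer_smul hd, smul_add, mul_smul_comm]; abel

theorem eOp_rename (hd : IsDerivation d) (e : Equiv.Perm (Fin k)) (Q : MvPolynomial (Fin k) F) :
    eOp d (rename e Q) = rename e (eOp d Q) := by
  simp only [eOp, coeffDer_rename hd, map_add, map_mul, map_sum, rename_X]
  rw [Equiv.sum_comp e (fun a => (X a : MvPolynomial (Fin k) F))]

/-- `eOp` as an additive map. -/
noncomputable def eHom (hd : IsDerivation d) (k : ℕ) :
    MvPolynomial (Fin k) F →+ MvPolynomial (Fin k) F :=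
  AddMonoidHom.mk' (eOp d) (eOp_add hd)

theorem eHom_apply (hd : IsDerivation d) (Q : MvPolynomial (Fin k) F) :
    eHom hd k Q = eOp d Q := rfl

theorem lamZero_eq (Q : MvPolynomial (Fin k) F) : lamZero d Q = - eOp d Q := by
  simp only [lamZero, eOp]; ring

/-- `lamZero` as an additive map. -/
noncomputable def lHom (hd : IsDerivation d) (k : ℕ) :
    MvPolynomial (Fin k) F →+ MvPolynomial (Fin k) F :=
  AddMonoidHom.mk' (lamZero d) (fun P Q => by rw [lamZero_eq, eOp_add hd, lamZero_eq, lamZero_eq]; abel)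

theorem lHom_apply (hd : IsDerivation d) (Q : MvPolynomial (Fin k) F) :
    lHom hd k Q = lamZero d Q := rfl

theorem lamZero_iter (hd : IsDerivation d) (n : ℕ) (Q : MvPolynomial (Fin k) F) :
    (lamZero d)^[n] Q = (lHom hd k)^[n] Q := rfl

theorem eOp_eq (hd : IsDerivation d) (Q : MvPolynomial (Fin k) F) : eOp d Q = - lHom hd k Q := by
  rw [lHom_apply, lamZero_eq, neg_neg]

/-- coefficient of the `n`-th power of the zeroth variable. -/
noncomputable def cf (n : ℕ) : MvPolynomial (Fin (k + 1)) F →ₗ[F] MvPolynomial (Fin k) F where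
  toFun Q := (finSuccEquiv F k Q).coeff n
  map_add' := by intro P Q; simp
  map_smul' := by intro a Q; simp

theorem cf_apply (n : ℕ) (Q : MvPolynomial (Fin (k + 1)) F) :
    cf n Q = (finSuccEquiv F k Q).coeff n := rfl

theorem coeff_cf (n : ℕ) (m : Fin k →₀ ℕ) (Q : MvPolynomial (Fin (k + 1)) F) :
    coeff m (cf n Q) = coeff (m.cons n) Q := finSuccEquiv_coeff_coeff _ _ _

theorem coeff_eq_cf (m : Fin (k + 1) →₀ ℕ) (Q : MvPolynomial (Fin (k + 1)) F) :
    coeff m Q = coeff m.tail (cf (m 0) Q) := by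
  rw [coeff_cf, Finsupp.cons_tail]

theorem cf_ext {P Q : MvPolynomial (Fin (k + 1)) F} (h : ∀ n, cf n P = cf n Q) : P = Q := by
  apply (finSuccEquiv F k).injective
  ext1 n
  exact h n

theorem cf_bound (Q : MvPolynomial (Fin (k + 1)) F) : ∃ M, ∀ n, M ≤ n → cf n Q = 0 :=
  ⟨(finSuccEquiv F k Q).natDegree + 1, fun n hn => by
    rw [cf_apply]
    exact Polynomial.coeff_eq_zero_of_natDegree_lt hn⟩

theorem cf_coeffDer (hd : IsDerivation d) (n : ℕ) (Q : MvPolynomial (Fin (k + 1)) F) :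
    cf n (coeffDer d Q) = coeffDer d (cf n Q) := by
  ext m; rw [coeff_cf, coeff_coeffDer hd, coeff_coeffDer hd, coeff_cf]

theorem cf_sumX_mul (n : ℕ) (Q : MvPolynomial (Fin (k + 1)) F) :
    cf n ((∑ a : Fin k, X a.succ) * Q) = (∑ a : Fin k, X a) * cf n Q := by
  rw [cf_apply, map_mul, map_sum]
  simp only [finSuccEquiv_X_succ]
  rw [← map_sum, Polynomial.coeff_C_mul, cf_apply]

theorem cf_eOp_zero (hd : IsDerivation d) (Q : MvPolynomial (Fin (k + 1)) F) :
    cf 0 (eOp d Q) = eOp d (cf 0 Q) := by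
  simp only [eOp, Fin.sum_univ_succ, add_mul, map_add, cf_coeffDer hd, cf_sumX_mul]
  have : cf 0 (X 0 * Q) = 0 := by
    rw [cf_apply, map_mul, finSuccEquiv_X_zero]; simp
  rw [this, zero_add]

theorem cf_eOp_succ (hd : IsDerivation d) (n : ℕ) (Q : MvPolynomial (Fin (k + 1)) F) :
    cf (n + 1) (eOp d Q) = cf n Q + eOp d (cf (n + 1) Q) := by
  simp only [eOp, Fin.sum_univ_succ, add_mul, map_add, cf_coeffDer hd, cf_sumX_mul]
  have : cf (n + 1) (X 0 * Q) = cf n Q := by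
    rw [cf_apply, map_mul, finSuccEquiv_X_zero, Polynomial.coeff_X_mul]; rfl
  rw [this, add_assoc]

/-- polynomial with given coefficients -/
noncomputable def mkP (M : ℕ) (f : ℕ → MvPolynomial (Fin k) F) : MvPolynomial (Fin (k + 1)) F :=
  (finSuccEquiv F k).symm (∑ n ∈ Finset.range M, Polynomial.monomial n (f n))

theorem cf_mkP (M : ℕ) (f : ℕ → MvPolynomial (Fin k) F) (n : ℕ) :
    cf n (mkP M f) = if n < M then f n else 0 := by
  simp [cf_apply, mkP, Polynomial.coeff_monomial]

theorem eOp_cf_vanish (hd : IsDerivation d) (N : ℕ) (Q : MvPolynomial (Fin (k + 1)) F)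
    (h : ∀ n, N < n → cf n (eOp d Q) = 0) : ∀ n, N ≤ n → cf n Q = 0 := by
  obtain ⟨M, hM⟩ := cf_bound Q
  have key : ∀ t n, N ≤ n → M ≤ n + t → cf n Q = 0 := by
    intro t
    induction t with
    | zero => intro n _ h2; exact hM n h2
    | succ t ih =>
      intro n h1 h2
      have h3 := h (n + 1) (by omega)
      rw [cf_eOp_succ hd, ih (n + 1) (by omega) (by omega)] at h3
      rw [← eHom_apply hd, map_zero, add_zero] at h3
      exact h3
  intro n hn
  exact key M n hn (by omega)

theorem eOp_injective (hd : IsDerivation d) (Q : MvPolynomial (Fin (k + 1)) F)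
    (h : eOp d Q = 0) : Q = 0 := by
  apply cf_ext
  intro n
  rw [map_zero]
  exact eOp_cf_vanish hd 0 Q (fun n _ => by rw [h, map_zero]) n (Nat.zero_le _)

/-- the projection to the quotient by the image of `eOp` -/
noncomputable def pr (hd : IsDerivation d) :
    MvPolynomial (Fin (k + 1)) F →+ MvPolynomial (Fin k) F :=
  AddMonoidHom.mk' (fun Q => (finSuccEquiv F k Q).sum (fun n c => (lHom hd k)^[n] c)) (by
    intro P Q
    rw [map_add]
    apply Polynomial.sum_add_index
    · intro i; exact iterate_map_zero _ _
    · intro i a b; exact iterate_map_add _ _ _ _)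

theorem pr_eq (hd : IsDerivation d) (Q : MvPolynomial (Fin (k + 1)) F) (M : ℕ)
    (hM : ∀ n, M ≤ n → cf n Q = 0) :
    pr hd Q = ∑ n ∈ Finset.range M, (lHom hd k)^[n] (cf n Q) := by
  change (finSuccEquiv F k Q).sum (fun n c => (lHom hd k)^[n] c) = _
  rw [Polynomial.sum_def]
  apply Finset.sum_subset
  · intro n hn
    rw [Finset.mem_range]
    by_contra hcon
    exact (Polynomial.mem_support_iff.1 hn) (hM n (by omega))
  · intro n _ hn
    rw [Polynomial.notMem_support_iff.1 hn, iterate_map_zero]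

theorem pr_eOp (hd : IsDerivation d) (R : MvPolynomial (Fin (k + 1)) F) :
    pr hd (eOp d R) = 0 := by
  have key : ∀ M, ∑ n ∈ Finset.range (M + 1), (lHom hd k)^[n] (cf n (eOp d R))
      = - (lHom hd k)^[M + 1] (cf M R) := by
    intro M
    induction M with
    | zero => rw [Finset.sum_range_one, cf_eOp_zero hd, eOp_eq hd]; rfl
    | succ M ih =>
      rw [Finset.sum_range_succ, ih, cf_eOp_succ hd, eOp_eq hd, iterate_map_add, iterate_map_neg,
        ← Function.iterate_succ_apply]
      abel
  obtain ⟨M, hM⟩ := cf_bound R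
  rw [pr_eq hd _ (M + 1), key, hM M le_rfl, iterate_map_zero, neg_zero]
  intro n hn
  obtain ⟨n, rfl⟩ : ∃ t, n = t + 1 := ⟨n - 1, by omega⟩
  rw [cf_eOp_succ hd, hM n (by omega), hM (n + 1) (by omega), ← eHom_apply hd, map_zero, add_zero]

theorem exists_of_pr (hd : IsDerivation d) (Q : MvPolynomial (Fin (k + 1)) F)
    (h : pr hd Q = 0) : ∃ R, eOp d R = Q := by
  obtain ⟨M, hM⟩ := cf_bound Q
  let r : ℕ → MvPolynomial (Fin k) F := fun n =>
    ∑ m ∈ Finset.range M, (lHom hd k)^[m] (cf (n + m) Q)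
  have hr : ∀ n, r n = cf n Q + lHom hd k (r (n + 1)) := by
    intro n
    have h1 : r n = ∑ m ∈ Finset.range (M + 1), (lHom hd k)^[m] (cf (n + m) Q) := by
      rw [Finset.sum_range_succ, hM (n + M) (by omega), iterate_map_zero, add_zero]
    rw [h1, Finset.sum_range_succ', map_sum, add_comm]
    simp only [Function.iterate_succ_apply', Function.iterate_zero, id, add_zero]
    congr 1
    refine Finset.sum_congr rfl fun m _ => ?_
    rw [show n + (m + 1) = n + 1 + m by omega]
  have hr0 : ∀ n, M ≤ n → r n = 0 := by
    intro n hn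
    apply Finset.sum_eq_zero
    intro m _
    rw [hM _ (by omega), iterate_map_zero]
  have hpr : r 0 = 0 := by
    rw [← h, pr_eq hd Q M hM]; simp [r]
  refine ⟨mkP M (fun n => r (n + 1)), ?_⟩
  have hcf : ∀ n, cf n (mkP M (fun n => r (n + 1))) = r (n + 1) := by
    intro n
    rw [cf_mkP]
    split_ifs with h
    · rfl
    · rw [hr0 _ (by omega)]
  apply cf_ext
  intro n
  cases n with
  | zero =>
    rw [cf_eOp_zero hd, hcf, eOp_eq hd]
    have := hr 0
    rw [hpr] at this
    exact (eq_neg_of_add_eq_zero_left this.symm).symm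
  | succ n =>
    rw [cf_eOp_succ hd, hcf, hcf, eOp_eq hd, hr (n + 1)]
    abel

theorem finSucc_rename_succ (T : MvPolynomial (Fin k) F) :
    finSuccEquiv F k (rename Fin.succ T) = Polynomial.C T := by
  induction T using MvPolynomial.induction_on with
  | C a => rw [rename_C]; simp [finSuccEquiv_apply]
  | add p q hp hq => simp [hp, hq]
  | mul_X p a hp => simp [hp, finSuccEquiv_X_succ]

theorem pr_rename_succ (hd : IsDerivation d) (T : MvPolynomial (Fin k) F) :
    pr hd (rename Fin.succ T) = T := by
  rw [pr_eq hd _ 1]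
  · simp [cf_apply, finSucc_rename_succ]
  · intro n hn
    rw [cf_apply, finSucc_rename_succ, Polynomial.coeff_C, if_neg (by omega)]

/-- extension of a permutation fixing zero -/
def ext0 (e : Equiv.Perm (Fin k)) : Equiv.Perm (Fin (k + 1)) := Equiv.Perm.decomposeFin.symm (0, e)

theorem ext0_zero (e : Equiv.Perm (Fin k)) : ext0 e 0 = 0 := by simp [ext0]
theorem ext0_succ (e : Equiv.Perm (Fin k)) (a : Fin k) : ext0 e a.succ = (e a).succ := by simp [ext0]
theorem ext0_sign (e : Equiv.Perm (Fin k)) : Equiv.Perm.sign (ext0 e) = Equiv.Perm.sign e := by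
  simp [ext0]

theorem cf_rename_ext0 (e : Equiv.Perm (Fin k)) (n : ℕ) (Q : MvPolynomial (Fin (k + 1)) F) :
    cf n (rename (ext0 e) Q) = rename e (cf n Q) := by
  have : finSuccEquiv F k (rename (ext0 e) Q)
      = Polynomial.map (rename e : _ →ₐ[F] MvPolynomial (Fin k) F).toRingHom (finSuccEquiv F k Q) := by
    induction Q using MvPolynomial.induction_on with
    | C a => rw [rename_C]; simp [finSuccEquiv_apply]
    | add p q hp hq => simp [hp, hq]
    | mul_X p a hp =>
      rw [map_mul, map_mul, hp, map_mul, Polynomial.map_mul, rename_X]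
      congr 1
      refine Fin.cases ?_ (fun b => ?_) a
      · rw [ext0_zero, finSuccEquiv_X_zero, Polynomial.map_X]
      · rw [ext0_succ, finSuccEquiv_X_succ, finSuccEquiv_X_succ]; simp
  rw [cf_apply, this, Polynomial.coeff_map]
  rfl

theorem pr_swap_monomial (hd : IsDerivation d) (α : Fin k) (m : Fin k →₀ ℕ) (c : F) :
    pr hd (rename (Equiv.swap 0 α.succ) (rename Fin.succ (monomial m c)))
      = (lamZero d)^[m α] (monomial (m.erase α) c) := by
  classical
  have h1 : (rename (Equiv.swap 0 α.succ) (rename Fin.succ (monomial m c)))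
      = monomial ((m.erase α).cons (m α)) c := by
    rw [rename_monomial, rename_monomial]
    refine congrArg (fun q => monomial q c) ?_
    rw [← Finsupp.equivMapDomain_eq_mapDomain]
    ext b
    rw [Finsupp.equivMapDomain_apply, Equiv.symm_swap]
    refine Fin.cases ?_ (fun b => ?_) b
    · rw [Equiv.swap_apply_left, Finsupp.mapDomain_apply (Fin.succ_injective k), Finsupp.cons_zero]
    · rw [Finsupp.cons_succ]
      by_cases hb : b = α
      · subst hb
        rw [Equiv.swap_apply_right, Finsupp.erase_same, Finsupp.mapDomain_of_notMem_range]
        simp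
      · rw [Equiv.swap_apply_of_ne_of_ne (Fin.succ_ne_zero b)
          (fun h => hb (Fin.succ_injective k h)), Finsupp.mapDomain_apply (Fin.succ_injective k),
          Finsupp.erase_ne hb]
  have h2 : ∀ n, cf n (monomial ((m.erase α).cons (m α)) c)
      = if n = m α then monomial (m.erase α) c else 0 := by
    intro n
    ext q
    rw [coeff_cf, coeff_monomial]
    by_cases hn : n = m α
    · subst hn
      rw [if_pos rfl, coeff_monomial]
      congr 1
      rw [eq_iff_iff]
      constructor
      · intro h
        have := congrArg Finsupp.tail h
        simpa using this
      · intro h; rw [h]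
    · rw [if_neg hn, if_neg, coeff_zero]
      intro h
      apply hn
      have := DFunLike.congr_fun h 0
      simpa using this.symm
  rw [h1, pr_eq hd _ (m α + 1), Finset.sum_eq_single (m α)]
  · rw [h2, if_pos rfl]; rfl
  · intro b _ hb
    rw [h2, if_neg hb, iterate_map_zero]
  · intro h; simp at h
  · intro n hn
    rw [h2, if_neg (by omega)]

theorem tauAct_eq (hd : IsDerivation d) {l : ℕ} (α : Fin k)
    (T : (Fin (k + 1) → Fin l) → MvPolynomial (Fin k) F) (i : Fin (k + 1) → Fin l) :
    tauAct d α T i = pr hd (rename (Equiv.swap 0 α.succ)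
      (rename Fin.succ (T (fun j => i (Equiv.swap 0 α.succ j))))) := by
  unfold tauAct
  generalize T (fun j => i (Equiv.swap 0 α.succ j)) = Q
  conv_rhs => rw [← support_sum_monomial_coeff Q]
  rw [map_sum, map_sum, map_sum]
  refine Finset.sum_congr rfl fun m _ => ?_
  rw [pr_swap_monomial]

end basic
end KD

namespace KD
open MvPolynomial

section ops
variable {F : Type*} [Field F] {d : F → F} {k l : ℕ}

theorem iter_sum {A ι : Type*} [AddCommMonoid A] (f : A →+ A) (s : Finset ι) (g : ι → A) (m : ℕ) :
    f^[m] (∑ n ∈ s, g n) = ∑ n ∈ s, f^[m] (g n) := by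
  induction m with
  | zero => rfl
  | succ m ih => simp only [Function.iterate_succ_apply', ih, map_sum]

theorem adj_one (hd : IsDerivation d) (n : ℕ) (c : F) : ∃ κ : ℕ → F, κ n = (-1) ^ n * c ∧
    (∀ m, n < m → κ m = 0) ∧ ∀ (k : ℕ) (Q : MvPolynomial (Fin k) F),
      c • (eOp d)^[n] Q = ∑ m ∈ Finset.range (n + 1), (lHom hd k)^[m] (κ m • Q) := by
  induction n with
  | zero =>
    refine ⟨fun m => if m = 0 then c else 0, by simp, fun m hm => by simp; omega, ?_⟩
    intro k Q
    simp
  | succ n ih =>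
    obtain ⟨κ, h1, h2, h3⟩ := ih
    refine ⟨fun m => (if m = 0 then 0 else - κ (m - 1)) - d (κ m), ?_, ?_, ?_⟩
    · simp only [Nat.succ_ne_zero, if_false, Nat.add_sub_cancel]
      rw [h1, h2 _ (Nat.lt_succ_self n), hd.map_zero, pow_succ]; ring
    · intro m hm
      show (if m = 0 then 0 else - κ (m - 1)) - d (κ m) = 0
      rw [if_neg (by omega), h2 _ (by omega), h2 _ (by omega), hd.map_zero]; simp
    · intro k Q
      rw [Function.iterate_succ_apply, h3]
      have key : ∀ m, (lHom hd k)^[m] (κ m • eOp d Q)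
          = (lHom hd k)^[m + 1] ((- κ m) • Q) + (lHom hd k)^[m] ((- d (κ m)) • Q) := by
        intro m
        rw [Function.iterate_succ_apply, ← iterate_map_add]
        congr 1
        have := eOp_smul hd (κ m) Q
        rw [neg_smul, neg_smul, map_neg, ← eOp_eq hd, this]
        abel
      simp only [key, sub_eq_add_neg, add_smul, iterate_map_add]
      rw [Finset.sum_add_distrib, Finset.sum_add_distrib, Finset.sum_range_succ' _ (n + 1)]
      simp only [Nat.succ_ne_zero, if_false, Nat.add_sub_cancel, if_true, zero_smul,
        iterate_map_zero, add_zero]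
      congr 1
      rw [Finset.sum_range_succ _ (n + 1), h2 _ (Nat.lt_succ_self n), hd.map_zero]
      simp [iterate_map_neg, iterate_map_zero]

theorem adj_mat (hd : IsDerivation d) (N : ℕ) (K : Fin l → Fin l → ℕ → F) :
    ∃ κ : Fin l → Fin l → ℕ → F, (∀ i j, κ i j N = (-1) ^ N * K i j N) ∧
    (∀ i j m, N < m → κ i j m = 0) ∧
    ∀ (i j : Fin l) (k : ℕ) (Q : MvPolynomial (Fin k) F),
      ∑ n ∈ Finset.range (N + 1), MvPolynomial.C (K i j n) * (eOp d)^[n] Q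
        = ∑ m ∈ Finset.range (N + 1), (lHom hd k)^[m] (κ i j m • Q) := by
  choose κ h1 h2 h3 using adj_one hd
  refine ⟨fun i j m => ∑ n ∈ Finset.range (N + 1), κ n (K i j n) m, ?_, ?_, ?_⟩
  · intro i j
    beta_reduce
    rw [Finset.sum_range_succ, h1, Finset.sum_eq_zero, zero_add]
    intro n hn
    exact h2 _ _ _ (Finset.mem_range.1 hn)
  · intro i j m hm
    beta_reduce
    apply Finset.sum_eq_zero
    intro n hn
    have := Finset.mem_range.1 hn
    exact h2 _ _ _ (by omega)
  · intro i j k Q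
    have hit : ∀ m, (lHom hd k)^[m] ((∑ n ∈ Finset.range (N + 1), κ n (K i j n) m) • Q)
        = ∑ n ∈ Finset.range (N + 1), (lHom hd k)^[m] (κ n (K i j n) m • Q) := by
      intro m
      rw [Finset.sum_smul, iter_sum]
    simp only [hit]
    rw [Finset.sum_comm]
    refine Finset.sum_congr rfl fun n hn => ?_
    rw [← smul_eq_C_mul, h3]
    have := Finset.mem_range.1 hn
    apply Finset.sum_subset
    · intro m hm
      rw [Finset.mem_range] at *
      omega
    · intro m _ hm
      rw [h2, zero_smul, iterate_map_zero]
      rw [Finset.mem_range] at hm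
      omega

/-- permutation action -/
noncomputable def act (σ : Equiv.Perm (Fin (k + 1))) :
    ((Fin (k + 1) → Fin l) → MvPolynomial (Fin (k + 1)) F) →ₗ[F]
    ((Fin (k + 1) → Fin l) → MvPolynomial (Fin (k + 1)) F) where
  toFun R i := rename σ (R (fun a => i (σ a)))
  map_add' := by intro R S; funext i; simp
  map_smul' := by intro a R; funext i; simp

theorem act_apply (σ : Equiv.Perm (Fin (k + 1)))
    (R : (Fin (k + 1) → Fin l) → MvPolynomial (Fin (k + 1)) F) (i : Fin (k + 1) → Fin l) :
    act σ R i = rename σ (R (fun a => i (σ a))) := rfl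

theorem act_mul (σ τ : Equiv.Perm (Fin (k + 1)))
    (R : (Fin (k + 1) → Fin l) → MvPolynomial (Fin (k + 1)) F) :
    act (σ * τ) R = act σ (act τ R) := by
  funext i
  simp only [act_apply, rename_rename, Equiv.Perm.coe_mul, Function.comp_apply]

theorem act_one (R : (Fin (k + 1) → Fin l) → MvPolynomial (Fin (k + 1)) F) :
    act 1 R = R := by
  funext i
  simp [act_apply]

/-- total skewsymmetry -/
def TSkew (R : (Fin (k + 1) → Fin l) → MvPolynomial (Fin (k + 1)) F) : Prop :=
  ∀ σ, act σ R = ((Equiv.Perm.sign σ : ℤ) : F) • R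

theorem update_comp_ext0 (i : Fin (k + 1) → Fin l) (σ : Equiv.Perm (Fin k)) (j : Fin l) :
    Function.update (fun a => i (ext0 σ a)) 0 j
      = Fin.cons (Function.update i 0 j 0) (fun a => Function.update i 0 j (Fin.succ (σ a))) := by
  funext a
  refine Fin.cases ?_ (fun b => ?_) a
  · simp
  · simp [ext0_succ]

theorem IsSkewsym.rename_update {P : (Fin (k + 1) → Fin l) → MvPolynomial (Fin k) F}
    (hP : IsSkewsym P) (σ : Equiv.Perm (Fin k)) (i : Fin (k + 1) → Fin l) (j : Fin l) :
    rename σ (P (Function.update (fun a => i (ext0 σ a)) 0 j))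
      = ((Equiv.Perm.sign σ : ℤ) : F) • P (Function.update i 0 j) := by
  rw [update_comp_ext0, hP, Int.cast_smul_eq_zsmul]

/-- the family `G` -/
noncomputable def gFun (N : ℕ) (κ : Fin l → Fin l → ℕ → F)
    (P : (Fin (k + 1) → Fin l) → MvPolynomial (Fin k) F) (i : Fin (k + 1) → Fin l) :
    MvPolynomial (Fin (k + 1)) F :=
  mkP (N + 1) (fun n => ∑ j, κ (i 0) j n • P (Function.update i 0 j))

theorem cf_gFun {N : ℕ} {κ : Fin l → Fin l → ℕ → F} (hκ : ∀ i j m, N < m → κ i j m = 0)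
    (P : (Fin (k + 1) → Fin l) → MvPolynomial (Fin k) F) (i : Fin (k + 1) → Fin l) (n : ℕ) :
    cf n (gFun N κ P i) = ∑ j, κ (i 0) j n • P (Function.update i 0 j) := by
  rw [gFun, cf_mkP]
  split_ifs with h
  · rfl
  · symm
    apply Finset.sum_eq_zero
    intro j _
    rw [hκ _ _ _ (by omega), zero_smul]

theorem gFun_add {N : ℕ} {κ : Fin l → Fin l → ℕ → F} (hκ : ∀ i j m, N < m → κ i j m = 0)
    (P Q : (Fin (k + 1) → Fin l) → MvPolynomial (Fin k) F) :
    gFun N κ (P + Q) = gFun N κ P + gFun N κ Q := by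
  funext i
  apply cf_ext
  intro n
  rw [Pi.add_apply, map_add]
  simp [cf_gFun hκ, Finset.sum_add_distrib]

theorem gFun_smul {N : ℕ} {κ : Fin l → Fin l → ℕ → F} (hκ : ∀ i j m, N < m → κ i j m = 0)
    (a : F) (P : (Fin (k + 1) → Fin l) → MvPolynomial (Fin k) F) :
    gFun N κ (a • P) = a • gFun N κ P := by
  funext i
  apply cf_ext
  intro n
  rw [Pi.smul_apply, map_smul]
  simp only [cf_gFun hκ, Finset.smul_sum, Pi.smul_apply]
  refine Finset.sum_congr rfl fun j _ => smul_comm _ _ _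

theorem gFun_skew {N : ℕ} {κ : Fin l → Fin l → ℕ → F} (hκ : ∀ i j m, N < m → κ i j m = 0)
    {P : (Fin (k + 1) → Fin l) → MvPolynomial (Fin k) F} (hP : IsSkewsym P)
    (σ : Equiv.Perm (Fin k)) :
    act (ext0 σ) (gFun N κ P) = ((Equiv.Perm.sign σ : ℤ) : F) • gFun N κ P := by
  funext i
  apply cf_ext
  intro n
  rw [act_apply, cf_rename_ext0, cf_gFun hκ, Pi.smul_apply, map_smul, cf_gFun hκ, map_sum,
    Finset.smul_sum]
  refine Finset.sum_congr rfl fun j _ => ?_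
  rw [map_smul, IsSkewsym.rename_update hP, ext0_zero]
  exact smul_comm _ _ _

/-- the family `S` -/
noncomputable def sFun (N : ℕ) (κ : Fin l → Fin l → ℕ → F)
    (P : (Fin (k + 1) → Fin l) → MvPolynomial (Fin k) F) :
    (Fin (k + 1) → Fin l) → MvPolynomial (Fin (k + 1)) F :=
  gFun N κ P - ∑ α : Fin k, act (Equiv.swap 0 α.succ) (gFun N κ P)

theorem sFun_add {N : ℕ} {κ : Fin l → Fin l → ℕ → F} (hκ : ∀ i j m, N < m → κ i j m = 0)
    (P Q : (Fin (k + 1) → Fin l) → MvPolynomial (Fin k) F) :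
    sFun N κ (P + Q) = sFun N κ P + sFun N κ Q := by
  simp only [sFun, gFun_add hκ, map_add, Finset.sum_add_distrib]
  abel

theorem sFun_smul {N : ℕ} {κ : Fin l → Fin l → ℕ → F} (hκ : ∀ i j m, N < m → κ i j m = 0)
    (a : F) (P : (Fin (k + 1) → Fin l) → MvPolynomial (Fin k) F) :
    sFun N κ (a • P) = a • sFun N κ P := by
  simp only [sFun, gFun_smul hκ, map_smul, smul_sub, Finset.smul_sum]

theorem decomp_mul (p : Fin (k + 1)) (e : Equiv.Perm (Fin k)) :
    Equiv.Perm.decomposeFin.symm (p, e) = Equiv.swap 0 p * ext0 e := by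
  ext1 a
  refine Fin.cases ?_ (fun b => ?_) a
  · simp [ext0_zero]
  · simp [ext0_succ]

theorem sFun_avg {N : ℕ} {κ : Fin l → Fin l → ℕ → F} (hκ : ∀ i j m, N < m → κ i j m = 0)
    {P : (Fin (k + 1) → Fin l) → MvPolynomial (Fin k) F} (hP : IsSkewsym P) :
    ∑ σ : Equiv.Perm (Fin (k + 1)), ((Equiv.Perm.sign σ : ℤ) : F) • act σ (gFun N κ P)
      = (k.factorial : F) • sFun N κ P := by
  rw [← Equiv.sum_comp Equiv.Perm.decomposeFin.symm, Fintype.sum_prod_type]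
  have h : ∀ (p : Fin (k + 1)) (e : Equiv.Perm (Fin k)),
      ((Equiv.Perm.sign (Equiv.Perm.decomposeFin.symm (p, e)) : ℤ) : F) •
        act (Equiv.Perm.decomposeFin.symm (p, e)) (gFun N κ P)
      = (if p = 0 then (1 : F) else -1) • act (Equiv.swap 0 p) (gFun N κ P) := by
    intro p e
    have h1 : ((Equiv.Perm.sign e : ℤ) : F) * ((Equiv.Perm.sign e : ℤ) : F) = 1 := by
      rw [← Int.cast_mul, ← Units.val_mul, Int.units_mul_self]; simp
    rw [decomp_mul, act_mul, gFun_skew hκ hP, map_smul, smul_smul, ← decomp_mul,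
      Equiv.Perm.decomposeFin.symm_sign]
    congr 1
    split_ifs
    · push_cast; linear_combination h1
    · push_cast; linear_combination -h1
  simp only [h, Finset.sum_const, Finset.card_univ, Fintype.card_perm, Fintype.card_fin]
  rw [Fin.sum_univ_succ]
  simp only [if_true, Equiv.swap_self, Fin.succ_ne_zero, if_false, sFun, one_smul, neg_smul]
  rw [smul_sub, sub_eq_add_neg, Finset.smul_sum, ← Finset.sum_neg_distrib]
  simp only [Nat.cast_smul_eq_nsmul, smul_neg]
  congr 2
  exact act_one _

theorem sFun_skew [CharZero F] {N : ℕ} {κ : Fin l → Fin l → ℕ → F}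
    (hκ : ∀ i j m, N < m → κ i j m = 0)
    {P : (Fin (k + 1) → Fin l) → MvPolynomial (Fin k) F} (hP : IsSkewsym P) :
    TSkew (sFun N κ P) := by
  intro τ
  have hk : (k.factorial : F) ≠ 0 := by exact_mod_cast k.factorial_ne_zero
  have h1 : (k.factorial : F) • act τ (sFun N κ P)
      = (k.factorial : F) • (((Equiv.Perm.sign τ : ℤ) : F) • sFun N κ P) := by
    rw [smul_comm, ← map_smul, ← sFun_avg hκ hP, map_sum, Finset.smul_sum]
    rw [← Equiv.sum_comp (Equiv.mulLeft τ) (fun σ => ((Equiv.Perm.sign τ : ℤ) : F) •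
      ((Equiv.Perm.sign σ : ℤ) : F) • act σ (gFun N κ P))]
    refine Finset.sum_congr rfl fun σ _ => ?_
    rw [map_smul, Equiv.coe_mulLeft, act_mul, smul_smul]
    congr 1
    have h1 : ((Equiv.Perm.sign τ : ℤ) : F) * ((Equiv.Perm.sign τ : ℤ) : F) = 1 := by
      rw [← Int.cast_mul, ← Units.val_mul, Int.units_mul_self]; simp
    rw [Equiv.Perm.sign_mul]
    push_cast
    linear_combination (-((Equiv.Perm.sign σ : ℤ) : F)) * h1
  exact smul_right_injective _ hk h1

end ops
end KD

namespace KD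
open MvPolynomial

section main
variable {F : Type*} [Field F] {d : F → F} {k l : ℕ}

theorem pr_gFun (hd : IsDerivation d) {N : ℕ} {K κ : Fin l → Fin l → ℕ → F}
    (hκ : ∀ i j m, N < m → κ i j m = 0)
    (hadj : ∀ (i j : Fin l) (k : ℕ) (Q : MvPolynomial (Fin k) F),
      ∑ n ∈ Finset.range (N + 1), MvPolynomial.C (K i j n) * (eOp d)^[n] Q
        = ∑ m ∈ Finset.range (N + 1), (lHom hd k)^[m] (κ i j m • Q))
    (P : (Fin (k + 1) → Fin l) → MvPolynomial (Fin k) F) (i : Fin (k + 1) → Fin l) :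
    pr hd (gFun N κ P i) = kCirc d N K P i := by
  rw [pr_eq hd _ (N + 1)]
  · simp only [cf_gFun hκ, kCirc, hadj, iter_sum]
    rw [Finset.sum_comm]
  · intro n hn
    rw [cf_gFun hκ]
    apply Finset.sum_eq_zero
    intro j _
    rw [hκ _ _ _ (by omega), zero_smul]

theorem sFun_apply (N : ℕ) (κ : Fin l → Fin l → ℕ → F)
    (P : (Fin (k + 1) → Fin l) → MvPolynomial (Fin k) F) (i : Fin (k + 1) → Fin l) :
    sFun N κ P i = gFun N κ P i - ∑ α : Fin k, act (Equiv.swap 0 α.succ) (gFun N κ P) i := by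
  simp [sFun, Finset.sum_apply]

theorem totSkew_iff [CharZero F] (hd : IsDerivation d) {N : ℕ} {K κ : Fin l → Fin l → ℕ → F}
    (hκ : ∀ i j m, N < m → κ i j m = 0)
    (hadj : ∀ (i j : Fin l) (k : ℕ) (Q : MvPolynomial (Fin k) F),
      ∑ n ∈ Finset.range (N + 1), MvPolynomial.C (K i j n) * (eOp d)^[n] Q
        = ∑ m ∈ Finset.range (N + 1), (lHom hd k)^[m] (κ i j m • Q))
    (P : (Fin (k + 1) → Fin l) → MvPolynomial (Fin k) F) :
    totSkew d (kCirc d N K P) = 0 ↔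
      ∃ R : (Fin (k + 1) → Fin l) → MvPolynomial (Fin (k + 1)) F,
        ∀ i, eOp d (R i) = sFun N κ P i := by
  have hG : ∀ i, ∃ R, eOp d R = rename Fin.succ (kCirc d N K P i) - gFun N κ P i := by
    intro i
    apply exists_of_pr hd
    rw [map_sub, pr_rename_succ, pr_gFun hd hκ hadj, sub_self]
  have htau : ∀ α i, tauAct d α (kCirc d N K P) i
      = pr hd (act (Equiv.swap 0 α.succ) (gFun N κ P) i) := by
    intro α i
    obtain ⟨R, hR⟩ := hG (fun j => i (Equiv.swap 0 α.succ j))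
    rw [tauAct_eq hd, eq_add_of_sub_eq hR.symm, map_add, map_add, ← eOp_rename hd, pr_eOp, zero_add,
      act_apply]
  have hpr : ∀ i, kCirc d N K P i - ∑ α : Fin k, tauAct d α (kCirc d N K P) i
      = pr hd (sFun N κ P i) := by
    intro i
    rw [sFun_apply, map_sub, map_sum, pr_gFun hd hκ hadj]
    simp only [htau]
  have hk : ((k : F) + 1)⁻¹ ≠ 0 := by
    apply inv_ne_zero
    exact_mod_cast k.succ_ne_zero
  constructor
  · intro h
    have h1 : ∀ i, ∃ R, eOp d R = sFun N κ P i := by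
      intro i
      apply exists_of_pr hd
      have := congrFun h i
      simp only [totSkew, Pi.zero_apply] at this
      rw [hpr] at this
      exact (smul_eq_zero.1 this).resolve_left hk
    choose R hR using h1
    exact ⟨R, hR⟩
  · rintro ⟨R, hR⟩
    funext i
    simp only [totSkew, Pi.zero_apply]
    rw [hpr, ← hR, pr_eOp, smul_zero]

/-- all partial degrees are less than `N` -/
def DegLt {n : ℕ} (N : ℕ) (Q : MvPolynomial (Fin n) F) : Prop := ∀ m a, N ≤ m a → coeff m Q = 0

theorem DegLt.cf_zero {N : ℕ} {Q : MvPolynomial (Fin (k + 1)) F} (h : DegLt N Q) {n : ℕ}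
    (hn : N ≤ n) : cf n Q = 0 := by
  ext m
  rw [coeff_cf, coeff_zero]
  exact h _ 0 (by rwa [Finsupp.cons_zero])

theorem DegLt.cf {N : ℕ} {Q : MvPolynomial (Fin (k + 1)) F} (h : DegLt N Q) (n : ℕ) :
    DegLt N (cf n Q) := by
  intro m a hm
  rw [coeff_cf]
  exact h _ a.succ (by rwa [Finsupp.cons_succ])

theorem DegLt.zero {n N : ℕ} : DegLt N (0 : MvPolynomial (Fin n) F) := fun _ _ _ => coeff_zero _

theorem DegLt.sum {n N : ℕ} {ι : Type*} (s : Finset ι) (f : ι → MvPolynomial (Fin n) F)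
    (h : ∀ i, DegLt N (f i)) : DegLt N (∑ i ∈ s, f i) := by
  intro m a hm
  rw [coeff_sum]
  exact Finset.sum_eq_zero fun i _ => h i m a hm

theorem DegLt.smul {n N : ℕ} (c : F) {Q : MvPolynomial (Fin n) F}
    (h : DegLt N Q) : DegLt N (c • Q) := by
  intro m a hm
  rw [coeff_smul, h m a hm, smul_zero]

theorem sign_ne {n : ℕ} (σ : Equiv.Perm (Fin n)) : ((Equiv.Perm.sign σ : ℤ) : F) ≠ 0 := by
  rcases Int.units_eq_one_or (Equiv.Perm.sign σ) with h | h <;> rw [h] <;> simp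

theorem TSkew.degLt {N : ℕ} {R : (Fin (k + 1) → Fin l) → MvPolynomial (Fin (k + 1)) F}
    (hR : TSkew R) (h : ∀ i n, N ≤ n → cf n (R i) = 0) (i) : DegLt N (R i) := by
  intro m a hm
  have h1 := congrArg (coeff m) (congrFun (hR (Equiv.swap 0 a)) i)
  rw [act_apply, coeff_rename_equiv, coeff_eq_cf, h, coeff_zero, Pi.smul_apply, coeff_smul] at h1
  · exact (smul_eq_zero.1 h1.symm).resolve_left (sign_ne _)
  · rw [Finsupp.equivMapDomain_apply]
    simpa using hm

theorem cf_act_gFun {N : ℕ} {κ : Fin l → Fin l → ℕ → F} (hκ : ∀ i j m, N < m → κ i j m = 0)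
    {P : (Fin (k + 1) → Fin l) → MvPolynomial (Fin k) F} (hP : ∀ i, DegLt N (P i)) (α : Fin k)
    (i : Fin (k + 1) → Fin l) (n : ℕ) (hn : N ≤ n) :
    cf n (act (Equiv.swap 0 α.succ) (gFun N κ P) i) = 0 := by
  ext m
  rw [act_apply, coeff_cf, coeff_rename_equiv, coeff_eq_cf, cf_gFun hκ, coeff_sum, coeff_zero]
  apply Finset.sum_eq_zero
  intro j _
  rw [coeff_smul, hP _ _ α, smul_zero]
  rw [Finsupp.tail_apply, Finsupp.equivMapDomain_apply]
  simpa using hn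

theorem cf_sFun {N : ℕ} {κ : Fin l → Fin l → ℕ → F} (hκ : ∀ i j m, N < m → κ i j m = 0)
    {P : (Fin (k + 1) → Fin l) → MvPolynomial (Fin k) F} (hP : ∀ i, DegLt N (P i))
    (i : Fin (k + 1) → Fin l) (n : ℕ) (hn : N ≤ n) :
    cf n (sFun N κ P i) = ∑ j, κ (i 0) j n • P (Function.update i 0 j) := by
  rw [sFun_apply, map_sub, map_sum, cf_gFun hκ,
    Finset.sum_eq_zero (fun α _ => cf_act_gFun hκ hP α i n hn), sub_zero]

theorem cf_sFun_gt {N : ℕ} {κ : Fin l → Fin l → ℕ → F} (hκ : ∀ i j m, N < m → κ i j m = 0)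
    {P : (Fin (k + 1) → Fin l) → MvPolynomial (Fin k) F} (hP : ∀ i, DegLt N (P i))
    (i : Fin (k + 1) → Fin l) (n : ℕ) (hn : N < n) :
    cf n (sFun N κ P i) = 0 := by
  rw [cf_sFun hκ hP i n hn.le]
  apply Finset.sum_eq_zero
  intro j _
  rw [hκ _ _ _ hn, zero_smul]

/-- the finite-dimensional space on which the connection lives -/
def W (F : Type*) [Field F] (k l N : ℕ) :
    Submodule F ((Fin (k + 1) → Fin l) → MvPolynomial (Fin (k + 1)) F) where
  carrier := {R | TSkew R ∧ ∀ i, DegLt N (R i)}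
  zero_mem' := ⟨fun σ => by rw [map_zero, smul_zero], fun _ => DegLt.zero⟩
  add_mem' := by
    rintro R S ⟨h1, h2⟩ ⟨h3, h4⟩
    refine ⟨fun σ => by rw [map_add, h1, h3, smul_add], fun i m a hm => ?_⟩
    rw [Pi.add_apply, coeff_add, h2 i m a hm, h4 i m a hm, add_zero]
  smul_mem' := by
    rintro c R ⟨h1, h2⟩
    exact ⟨fun σ => by rw [map_smul, h1, smul_comm], fun i => (h2 i).smul c⟩

theorem mem_W {N : ℕ} {R : (Fin (k + 1) → Fin l) → MvPolynomial (Fin (k + 1)) F} :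
    R ∈ W F k l N ↔ TSkew R ∧ ∀ i, DegLt N (R i) := Iff.rfl

theorem inv_sum {V : Type*} [AddCommGroup V] [Module F V] {A B : Matrix (Fin l) (Fin l) F}
    (h : A * B = 1) (f : (Fin (k + 1) → Fin l) → V) (i : Fin (k + 1) → Fin l) :
    ∑ j, A (i 0) j • ∑ j', B (Function.update i 0 j 0) j' •
      f (Function.update (Function.update i 0 j) 0 j') = f i := by
  simp only [Function.update_self, Function.update_idem, Finset.smul_sum, smul_smul]
  rw [Finset.sum_comm]
  simp only [← Finset.sum_smul, ← Matrix.mul_apply, h]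
  rw [Finset.sum_eq_single (i 0)]
  · rw [Matrix.one_apply_eq, one_smul, Function.update_eq_self]
  · intro j _ hj
    rw [Matrix.one_apply_ne hj.symm, zero_smul]
  · simp

/-- the map recovering `P` -/
noncomputable def theta (d : F → F) (N : ℕ) (B : Matrix (Fin l) (Fin l) F)
    (R : (Fin (k + 1) → Fin l) → MvPolynomial (Fin (k + 1)) F) :
    (Fin (k + 1) → Fin l) → MvPolynomial (Fin k) F :=
  fun i => ∑ j, B (i 0) j • cf N (eOp d (R (Function.update i 0 j)))

theorem theta_add (hd : IsDerivation d) (N : ℕ) (B : Matrix (Fin l) (Fin l) F)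
    (R S : (Fin (k + 1) → Fin l) → MvPolynomial (Fin (k + 1)) F) :
    theta d N B (R + S) = theta d N B R + theta d N B S := by
  funext i
  simp [theta, eOp_add hd, Finset.sum_add_distrib]

theorem theta_smul (hd : IsDerivation d) {N : ℕ} (B : Matrix (Fin l) (Fin l) F) (a : F)
    {R : (Fin (k + 1) → Fin l) → MvPolynomial (Fin (k + 1)) F} (hR : R ∈ W F k l N) :
    theta d N B (a • R) = a • theta d N B R := by
  funext i
  simp only [theta, Pi.smul_apply, eOp_smul hd, map_add, map_smul, (hR.2 _).cf_zero le_rfl,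
    smul_zero, zero_add, Finset.smul_sum]
  exact Finset.sum_congr rfl fun j _ => smul_comm _ _ _

theorem eOp_zero (hd : IsDerivation d) : eOp d (0 : MvPolynomial (Fin k) F) = 0 := by
  rw [← eHom_apply hd, map_zero]

theorem eOp_sub (hd : IsDerivation d) (P Q : MvPolynomial (Fin k) F) :
    eOp d (P - Q) = eOp d P - eOp d Q := by
  simp only [← eHom_apply hd, map_sub]

theorem eOp_int (hd : IsDerivation d) (z : ℤ) (Q : MvPolynomial (Fin k) F) :
    eOp d ((z : F) • Q) = (z : F) • eOp d Q := by
  rw [Int.cast_smul_eq_zsmul, Int.cast_smul_eq_zsmul, ← eHom_apply hd, map_zsmul]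
  rfl

theorem theta_degLt (hd : IsDerivation d) {N : ℕ} (B : Matrix (Fin l) (Fin l) F)
    {R : (Fin (k + 1) → Fin l) → MvPolynomial (Fin (k + 1)) F} (hR : R ∈ W F k l N)
    (i : Fin (k + 1) → Fin l) : DegLt N (theta d N B R i) := by
  apply DegLt.sum
  intro j
  apply DegLt.smul
  generalize Function.update i 0 j = i'
  have h := hR.2 i'
  cases N with
  | zero =>
    have : R i' = 0 := by
      ext m
      rw [h m 0 (Nat.zero_le _), coeff_zero]
    rw [this, eOp_zero hd, map_zero]
    exact DegLt.zero
  | succ n =>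
    rw [cf_eOp_succ hd, h.cf_zero le_rfl, eOp_zero hd, add_zero]
    exact h.cf n

theorem theta_skew (hd : IsDerivation d) {N : ℕ} (B : Matrix (Fin l) (Fin l) F)
    {R : (Fin (k + 1) → Fin l) → MvPolynomial (Fin (k + 1)) F} (hR : R ∈ W F k l N) :
    IsSkewsym (theta d N B R) := by
  intro σ i
  rw [← Int.cast_smul_eq_zsmul F]
  simp only [theta, map_sum, map_smul, Fin.cons_zero, Finset.smul_sum]
  refine Finset.sum_congr rfl fun j _ => ?_
  rw [← cf_rename_ext0, ← eOp_rename hd]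
  have h1 : Function.update (Fin.cons (i 0) (fun a => i (Fin.succ (σ a))) : Fin (k + 1) → Fin l) 0 j
      = fun a => Function.update i 0 j (ext0 σ a) := by
    funext a
    refine Fin.cases ?_ (fun b => ?_) a
    · simp [ext0_zero]
    · simp [ext0_succ]
  rw [h1, ← act_apply, hR.1, Pi.smul_apply, ext0_sign, eOp_int hd, map_smul, smul_comm]

/-- the connection -/
noncomputable def DD (d : F → F) (N : ℕ) (κ : Fin l → Fin l → ℕ → F)
    (B : Matrix (Fin l) (Fin l) F)
    (R : (Fin (k + 1) → Fin l) → MvPolynomial (Fin (k + 1)) F) :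
    (Fin (k + 1) → Fin l) → MvPolynomial (Fin (k + 1)) F :=
  (fun i => eOp d (R i)) - sFun N κ (theta d N B R)

theorem TSkew.eOp (hd : IsDerivation d) {R : (Fin (k + 1) → Fin l) → MvPolynomial (Fin (k + 1)) F}
    (hR : TSkew R) : TSkew (fun i => eOp d (R i)) := by
  intro σ
  funext i
  rw [act_apply, ← eOp_rename hd, ← act_apply, hR, Pi.smul_apply, eOp_int hd]
  rfl

theorem TSkew.sub {R S : (Fin (k + 1) → Fin l) → MvPolynomial (Fin (k + 1)) F}
    (hR : TSkew R) (hS : TSkew S) : TSkew (R - S) := by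
  intro σ
  rw [map_sub, hR, hS, smul_sub]

theorem DD_mem [CharZero F] (hd : IsDerivation d) {N : ℕ} {κ : Fin l → Fin l → ℕ → F}
    (hκ : ∀ i j m, N < m → κ i j m = 0) {B : Matrix (Fin l) (Fin l) F}
    (hB : (Matrix.of fun i j => κ i j N) * B = 1)
    {R : (Fin (k + 1) → Fin l) → MvPolynomial (Fin (k + 1)) F} (hR : R ∈ W F k l N) :
    DD d N κ B R ∈ W F k l N := by
  have h1 : TSkew (DD d N κ B R) := (hR.1.eOp hd).sub (sFun_skew hκ (theta_skew hd B hR))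
  refine ⟨h1, h1.degLt ?_⟩
  intro i n hn
  rw [DD, Pi.sub_apply, map_sub]
  rcases hn.eq_or_lt with rfl | hn
  · rw [cf_sFun hκ (theta_degLt hd B hR) i N le_rfl, sub_eq_zero]
    exact (inv_sum hB (fun i => cf N (eOp d (R i))) i).symm
  · rw [cf_sFun_gt hκ (theta_degLt hd B hR) i n hn, sub_zero]
    obtain ⟨n, rfl⟩ : ∃ t, n = t + 1 := ⟨n - 1, by omega⟩
    rw [cf_eOp_succ hd, (hR.2 i).cf_zero (by omega), (hR.2 i).cf_zero (by omega), eOp_zero hd,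
      add_zero]

theorem DD_add (hd : IsDerivation d) {N : ℕ} {κ : Fin l → Fin l → ℕ → F}
    (hκ : ∀ i j m, N < m → κ i j m = 0) (B : Matrix (Fin l) (Fin l) F)
    (R S : (Fin (k + 1) → Fin l) → MvPolynomial (Fin (k + 1)) F) :
    DD d N κ B (R + S) = DD d N κ B R + DD d N κ B S := by
  rw [DD, DD, DD, theta_add hd, sFun_add hκ]
  funext i
  simp only [Pi.sub_apply, Pi.add_apply, eOp_add hd]
  abel

theorem DD_smul (hd : IsDerivation d) {N : ℕ} {κ : Fin l → Fin l → ℕ → F}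
    (hκ : ∀ i j m, N < m → κ i j m = 0) (B : Matrix (Fin l) (Fin l) F) (a : F)
    {R : (Fin (k + 1) → Fin l) → MvPolynomial (Fin (k + 1)) F} (hR : R ∈ W F k l N) :
    DD d N κ B (a • R) = d a • R + a • DD d N κ B R := by
  rw [DD, DD, theta_smul hd B a hR, sFun_smul hκ]
  funext i
  simp only [Pi.sub_apply, Pi.add_apply, Pi.smul_apply, eOp_smul hd, smul_sub]
  abel

theorem theta_of_eq {N : ℕ} {κ : Fin l → Fin l → ℕ → F}
    (hκ : ∀ i j m, N < m → κ i j m = 0) {B : Matrix (Fin l) (Fin l) F}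
    (hB : B * (Matrix.of fun i j => κ i j N) = 1)
    {R : (Fin (k + 1) → Fin l) → MvPolynomial (Fin (k + 1)) F}
    {P : (Fin (k + 1) → Fin l) → MvPolynomial (Fin k) F} (hP : ∀ i, DegLt N (P i))
    (h : ∀ i, eOp d (R i) = sFun N κ P i) : theta d N B R = P := by
  funext i
  simp only [theta, h, cf_sFun hκ hP _ N le_rfl]
  exact inv_sum hB P i

theorem mem_W_of_eq [CharZero F] (hd : IsDerivation d) {N : ℕ} {κ : Fin l → Fin l → ℕ → F}
    (hκ : ∀ i j m, N < m → κ i j m = 0)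
    {R : (Fin (k + 1) → Fin l) → MvPolynomial (Fin (k + 1)) F}
    {P : (Fin (k + 1) → Fin l) → MvPolynomial (Fin k) F} (hP : ∀ i, DegLt N (P i))
    (hs : IsSkewsym P)
    (h : ∀ i, eOp d (R i) = sFun N κ P i) : R ∈ W F k l N := by
  have h1 : TSkew R := by
    intro σ
    funext i
    rw [← sub_eq_zero]
    apply eOp_injective hd
    rw [eOp_sub hd, act_apply, eOp_rename hd, h, ← act_apply, sFun_skew hκ hs, Pi.smul_apply,
      Pi.smul_apply, eOp_int hd, h, sub_self]
  refine ⟨h1, h1.degLt fun i => ?_⟩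
  apply eOp_cf_vanish hd
  intro n hn
  rw [h]
  exact cf_sFun_gt hκ hP i n hn

end main
end KD

namespace KD
open MvPolynomial

section dim
variable {F : Type*} [Field F] {k l : ℕ}

/-- basis vectors extended by zero -/
noncomputable def eV (F : Type*) [Field F] (l N : ℕ) (i : Fin l) (n : ℕ) : (Fin l × Fin N) → F :=
  if h : n < N then Pi.single (i, ⟨n, h⟩) 1 else 0

/-- the family attached to an alternating map -/
noncomputable def phi (F : Type*) [Field F] (k l N : ℕ) :
    ((Fin l × Fin N → F) [⋀^Fin (k + 1)]→ₗ[F] F) →ₗ[F]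
    ((Fin (k + 1) → Fin l) → MvPolynomial (Fin (k + 1)) F) where
  toFun ω i := ∑ n : Fin (k + 1) → Fin N,
    monomial (Finsupp.equivFunOnFinite.symm (fun a => (n a : ℕ)))
      (ω (fun a => eV F l N (i a) (n a)))
  map_add' := by
    intro ω η; funext i
    simp [Finset.sum_add_distrib]
  map_smul' := by
    intro c ω; funext i
    simp [Finset.smul_sum, smul_monomial]

theorem coeff_phi (N : ℕ) (ω : (Fin l × Fin N → F) [⋀^Fin (k + 1)]→ₗ[F] F)
    (i : Fin (k + 1) → Fin l) (m : Fin (k + 1) →₀ ℕ) :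
    coeff m (phi F k l N ω i) = ω (fun a => eV F l N (i a) (m a)) := by
  classical
  change coeff m (∑ n : Fin (k + 1) → Fin N,
    monomial (Finsupp.equivFunOnFinite.symm (fun a => (n a : ℕ)))
      (ω (fun a => eV F l N (i a) (n a)))) = _
  rw [coeff_sum]
  simp only [coeff_monomial]
  by_cases h : ∀ a, m a < N
  · rw [Finset.sum_eq_single (fun a => ⟨m a, h a⟩)]
    · rw [if_pos]
      ext a; simp
    · intro n _ hn
      rw [if_neg]
      intro h1
      apply hn
      funext a
      apply Fin.ext
      have := DFunLike.congr_fun h1 a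
      simpa using this
    · simp
  · push Not at h
    obtain ⟨a, ha⟩ := h
    rw [ω.map_coord_zero a, Finset.sum_eq_zero]
    · intro n _
      rw [if_neg]
      intro h1
      have := DFunLike.congr_fun h1 a
      simp at this
      have := (n a).2
      omega
    · simp only [eV]
      rw [dif_neg (by omega)]

theorem phi_mem (N : ℕ) (ω : (Fin l × Fin N → F) [⋀^Fin (k + 1)]→ₗ[F] F) :
    phi F k l N ω ∈ W F k l N := by
  constructor
  · intro σ
    funext i
    ext m
    rw [act_apply, coeff_rename_equiv, coeff_phi, Pi.smul_apply, coeff_smul, coeff_phi]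
    have := ω.map_perm (fun a => eV F l N (i a) (m a)) σ
    simp only [Finsupp.equivMapDomain_apply, Equiv.symm_symm]
    refine this.trans ?_
    rw [smul_eq_mul, Units.smul_def, zsmul_eq_mul]
  · intro i m a hm
    rw [coeff_phi, ω.map_coord_zero a]
    simp only [eV]
    rw [dif_neg (by omega)]

theorem phi_inj (N : ℕ) : Function.Injective (phi F k l N) := by
  intro ω η h
  apply Module.Basis.ext_alternating (Pi.basisFun F (Fin l × Fin N))
  intro v _
  have h1 := congrArg (coeff (Finsupp.equivFunOnFinite.symm (fun a => ((v a).2 : ℕ))))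
    (congrFun h (fun a => (v a).1))
  rw [coeff_phi, coeff_phi] at h1
  have h2 : (fun a => eV F l N (v a).1
      ((Finsupp.equivFunOnFinite.symm (fun a => ((v a).2 : ℕ)) : Fin (k + 1) →₀ ℕ) a))
      = fun a => Pi.basisFun F (Fin l × Fin N) (v a) := by
    funext a
    simp [eV]
  rw [h2] at h1
  exact h1

/-- alternating map attached to a family -/
noncomputable def psi [CharZero F] {N : ℕ}
    (R : (Fin (k + 1) → Fin l) → MvPolynomial (Fin (k + 1)) F)
    (hR : R ∈ W F k l N) : (Fin l × Fin N → F) [⋀^Fin (k + 1)]→ₗ[F] F where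
  toMultilinearMap := ∑ j : Fin (k + 1) → Fin l × Fin N,
    coeff (Finsupp.equivFunOnFinite.symm (fun a => ((j a).2 : ℕ))) (R (fun a => (j a).1)) •
      (MultilinearMap.mkPiAlgebra F (Fin (k + 1)) F).compLinearMap
        (fun a => LinearMap.proj (j a))
  map_eq_zero_of_eq' := by
    intro v a b hab hne
    change (∑ j : Fin (k + 1) → Fin l × Fin N,
      coeff (Finsupp.equivFunOnFinite.symm (fun a => ((j a).2 : ℕ))) (R (fun a => (j a).1)) •
      (MultilinearMap.mkPiAlgebra F (Fin (k + 1)) F).compLinearMap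
        (fun a => LinearMap.proj (j a))) v = 0
    simp only [MultilinearMap.sum_apply, MultilinearMap.smul_apply,
      MultilinearMap.compLinearMap_apply, MultilinearMap.mkPiAlgebra_apply, LinearMap.proj_apply,
      smul_eq_mul]
    apply self_eq_neg.1
    conv_lhs => rw [← Equiv.sum_comp ((Equiv.swap a b).arrowCongr (Equiv.refl (Fin l × Fin N)))]
    rw [← Finset.sum_neg_distrib]
    refine Finset.sum_congr rfl fun j _ => ?_
    have h1 := congrArg (coeff (Finsupp.equivFunOnFinite.symm (fun a => ((j a).2 : ℕ))))
      (congrFun (hR.1 (Equiv.swap a b)) (fun a => (j a).1))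
    rw [act_apply, coeff_rename_equiv, Pi.smul_apply, coeff_smul, Equiv.Perm.sign_swap hne] at h1
    have h2 : (Finsupp.equivMapDomain (Equiv.swap a b).symm
        (Finsupp.equivFunOnFinite.symm (fun a => ((j a).2 : ℕ))))
        = Finsupp.equivFunOnFinite.symm (fun c => ((j (Equiv.swap a b c)).2 : ℕ)) := by
      ext c
      simp [Finsupp.equivMapDomain_apply]
    rw [h2] at h1
    have h3 : ∏ c, v c (j (Equiv.swap a b c)) = ∏ c, v c (j c) := by
      rw [← Equiv.prod_comp (Equiv.swap a b)]
      refine Finset.prod_congr rfl fun c _ => ?_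
      rw [Equiv.swap_apply_self]
      refine congrFun ?_ (j c)
      by_cases hca : c = a
      · subst hca; rw [Equiv.swap_apply_left, hab]
      · by_cases hcb : c = b
        · subst hcb; rw [Equiv.swap_apply_right, hab]
        · rw [Equiv.swap_apply_of_ne_of_ne hca hcb]
    simp only [Equiv.arrowCongr_apply, Equiv.coe_refl, Function.comp_apply, id, Equiv.symm_swap]
    rw [h1, h3]
    simp

theorem psi_apply [CharZero F] {N : ℕ}
    (R : (Fin (k + 1) → Fin l) → MvPolynomial (Fin (k + 1)) F)
    (hR : R ∈ W F k l N) (v : Fin (k + 1) → Fin l × Fin N → F) :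
    psi R hR v = ∑ j : Fin (k + 1) → Fin l × Fin N,
      coeff (Finsupp.equivFunOnFinite.symm (fun a => ((j a).2 : ℕ))) (R (fun a => (j a).1)) *
        ∏ a, v a (j a) := by
  change (∑ j : Fin (k + 1) → Fin l × Fin N,
      coeff (Finsupp.equivFunOnFinite.symm (fun a => ((j a).2 : ℕ))) (R (fun a => (j a).1)) •
      (MultilinearMap.mkPiAlgebra F (Fin (k + 1)) F).compLinearMap
        (fun a => LinearMap.proj (j a))) v = _
  simp only [MultilinearMap.sum_apply, MultilinearMap.smul_apply,
      MultilinearMap.compLinearMap_apply, MultilinearMap.mkPiAlgebra_apply, LinearMap.proj_apply,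
      smul_eq_mul]

theorem phi_psi [CharZero F] {N : ℕ}
    (R : (Fin (k + 1) → Fin l) → MvPolynomial (Fin (k + 1)) F)
    (hR : R ∈ W F k l N) : phi F k l N (psi R hR) = R := by
  funext i
  ext m
  rw [coeff_phi]
  by_cases h : ∀ a, m a < N
  · rw [psi_apply, Finset.sum_eq_single (fun a => (i a, ⟨m a, h a⟩))]
    · rw [Finset.prod_eq_one, mul_one]
      · congr 1
        ext a; simp
      · intro a _
        simp [eV, h a]
    · intro j _ hj
      obtain ⟨a, ha⟩ := Function.ne_iff.1 hj
      rw [Finset.prod_eq_zero (Finset.mem_univ a), mul_zero]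
      rw [eV, dif_pos (h a), Pi.single_eq_of_ne ha]
    · simp
  · push Not at h
    obtain ⟨a, ha⟩ := h
    rw [hR.2 i m a ha]
    apply AlternatingMap.map_coord_zero _ a
    rw [eV, dif_neg (by omega)]

/-- `W` is the space of alternating maps -/
noncomputable def wEquiv (F : Type*) [Field F] [CharZero F] (k l N : ℕ) :
    ((Fin l × Fin N → F) [⋀^Fin (k + 1)]→ₗ[F] F) ≃ₗ[F] W F k l N :=
  LinearEquiv.ofBijective ((phi F k l N).codRestrict _ (phi_mem N)) (by
    constructor
    · intro ω η h
      exact phi_inj N (congrArg Subtype.val h)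
    · rintro ⟨R, hR⟩
      exact ⟨psi R hR, Subtype.ext (phi_psi R hR)⟩)

noncomputable def wEquiv' (F : Type*) [Field F] [CharZero F] (k l N : ℕ) :
    Module.Dual F (⋀[F]^(k + 1) (Fin l × Fin N → F)) ≃ₗ[F] W F k l N :=
  exteriorPower.alternatingMapLinearEquiv.symm.trans (wEquiv F k l N)

instance [CharZero F] (N : ℕ) : FiniteDimensional F (W F k l N) :=
  Module.Finite.equiv (wEquiv' F k l N)

theorem finrank_W [CharZero F] (N : ℕ) :
    Module.finrank F (W F k l N) = (N * l).choose (k + 1) := by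
  rw [← (wEquiv' F k l N).finrank_eq, Subspace.dual_finrank_eq, exteriorPower.finrank_eq]
  simp [mul_comm]

end dim
end KD

/-- Let `F` be a linearly closed differential field of characteristic zero with constants
`C`, and `K` an `ℓ×ℓ` matrix differential operator of order `N` with invertible leading
coefficient.  The skewsymmetric `k`-differential operators `P` on `F^ℓ` whose entries
have degree at most `N−1` in each variable and which satisfy `⟨K∘P⟩⁻ = 0` form a
`C`-vector space of dimension `Nℓ choose (k+1)`. -/
theorem stmt_11 (F : Type*) [Field F] [CharZero F] (d : F → F) (hd : IsDerivation d)
    (hlc : LinearlyClosed d)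
    (C : Subfield F) (hC : ∀ x : F, x ∈ C ↔ d x = 0)
    (k l N : ℕ) (hl : 0 < l)
    (K : Fin l → Fin l → ℕ → F)
    (hK : IsUnit (Matrix.of fun i j : Fin l => K i j N))
    (Sol : Submodule C ((Fin (k + 1) → Fin l) → MvPolynomial (Fin k) F))
    (hSol : ∀ P : (Fin (k + 1) → Fin l) → MvPolynomial (Fin k) F, P ∈ Sol ↔
      (IsSkewsym P ∧
       (∀ i, ∀ m ∈ (P i).support, ∀ α : Fin k, m α < N) ∧
       totSkew d (kCirc d N K P) = 0)) :
    Module.rank C Sol = ((N * l).choose (k + 1) : Cardinal) := by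
  obtain ⟨κ, hκN, hκ, hadj⟩ := KD.adj_mat hd N K
  have hu : IsUnit (Matrix.of fun i j : Fin l => κ i j N) := by
    have h1 : (Matrix.of fun i j : Fin l => κ i j N)
        = ((-1 : F) ^ N) • (Matrix.of fun i j : Fin l => K i j N) := by
      ext i j
      simp [hκN]
    rw [h1]
    have h2 : IsUnit ((-1 : F) ^ N) := (isUnit_one.neg).pow N
    rw [Matrix.isUnit_iff_isUnit_det] at hK ⊢
    rw [Matrix.det_smul]
    exact (h2.pow _).mul hK
  obtain ⟨B, hB1, hB2⟩ := isUnit_iff_exists.1 hu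
  have hdeg : ∀ P : (Fin (k + 1) → Fin l) → MvPolynomial (Fin k) F,
      (∀ i, ∀ m ∈ (P i).support, ∀ α : Fin k, m α < N) ↔ ∀ i, KD.DegLt N (P i) := by
    intro P
    refine forall_congr' fun i => ⟨fun h m a hm => ?_, fun h m hm a => ?_⟩
    · by_contra hc
      exact absurd (h m (MvPolynomial.mem_support_iff.2 hc) a) (by omega)
    · by_contra hc
      exact MvPolynomial.mem_support_iff.1 hm (h m a (by omega))
  let D : KD.W F k l N → KD.W F k l N := fun R => ⟨KD.DD d N κ B R.1, KD.DD_mem hd hκ hB1 R.2⟩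
  have hD : IsConn d D := by
    constructor
    · intro v w
      exact Subtype.ext (KD.DD_add hd hκ B v.1 w.1)
    · intro a v
      exact Subtype.ext (KD.DD_smul hd hκ B a v.2)
  let H : Submodule C (KD.W F k l N) :=
    { carrier := {R | D R = 0}
      zero_mem' := hD.zero
      add_mem' := by
        intro v w hv hw
        change D (v + w) = 0
        rw [hD.add, show D v = 0 from hv, show D w = 0 from hw, add_zero]
      smul_mem' := by
        intro c v hv
        change D ((c : F) • v) = 0
        rw [hD.smul, show D v = 0 from hv, (hC _).1 c.2, zero_smul, smul_zero, add_zero] }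
  have hHmem : ∀ R, R ∈ H ↔ D R = 0 := fun R => Iff.rfl
  have hHeq : ∀ R, R ∈ H → ∀ i, eOp d (R.1 i) = KD.sFun N κ (KD.theta d N B R.1) i := by
    intro R hR i
    have h1 := congrFun (congrArg Subtype.val ((hHmem R).1 hR)) i
    exact sub_eq_zero.1 h1
  have hmem : ∀ R, R ∈ H → KD.theta d N B R.1 ∈ Sol := by
    intro R hR
    rw [hSol, hdeg]
    exact ⟨KD.theta_skew hd B R.2, KD.theta_degLt hd B R.2,
      (KD.totSkew_iff hd hκ hadj _).2 ⟨R.1, hHeq R hR⟩⟩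
  let T : H →ₗ[C] Sol :=
    { toFun := fun R => ⟨KD.theta d N B R.1.1, hmem R.1 R.2⟩
      map_add' := fun R S => Subtype.ext (KD.theta_add hd N B R.1.1 S.1.1)
      map_smul' := fun c R => Subtype.ext (KD.theta_smul hd B (c : F) R.1.2) }
  have hT : Function.Bijective T := by
    constructor
    · rw [injective_iff_map_eq_zero]
      intro R hR
      have h1 : KD.theta d N B R.1.1 = 0 := congrArg Subtype.val hR
      apply Subtype.ext
      apply Subtype.ext
      funext i
      apply KD.eOp_injective hd
      rw [hHeq R.1 R.2 i, h1]
      have h2 := KD.sFun_smul hκ (0 : F) (0 : (Fin (k + 1) → Fin l) → MvPolynomial (Fin k) F)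
      rw [zero_smul, zero_smul] at h2
      rw [h2]
      rfl
    · rintro ⟨P, hP⟩
      obtain ⟨h1, h2, h3⟩ := (hSol P).1 hP
      rw [hdeg] at h2
      obtain ⟨R, hR⟩ := (KD.totSkew_iff hd hκ hadj P).1 h3
      have hW := KD.mem_W_of_eq hd hκ h2 h1 hR
      have hth := KD.theta_of_eq hκ hB2 h2 hR
      refine ⟨⟨⟨R, hW⟩, (hHmem _).2 ?_⟩, Subtype.ext hth⟩
      apply Subtype.ext
      change KD.DD d N κ B R = 0
      rw [KD.DD, hth]
      funext i
      exact sub_eq_zero.2 (hR i)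
  rw [← (LinearEquiv.ofBijective T hT).rank_eq,
    hD.rank_ker hd hlc C hC _ D H hHmem, KD.finrank_W]
end

section
/- Let k ≥ 1 and let F be a differential field of characteristic zero such that the derivation ∂ : F → F is surjective. Then every totally skewsymmetric k-differential operator S on F^ℓ admits a decomposition S_{i_0,…,i_k} = Σ Λ₀^{m_0}(λ_1^{m_1}⋯λ_k^{m_k} · s^{m_0,…,m_k}_{i_0,…,i_k}) for some M ∈ ℤ≥0, where the sum ranges over tuples (m_0,…,m_k) ∈ {0,…,M}^{k+1} whose non-increasing rearrangement (μ_0,…,μ_k) satisfies μ_0 − μ_1 = 1, and where the coefficients s^{m_0,…,m_k}_{i_0,…,i_k} ∈ F are skewsymmetric with respect to simultaneous permutations of upper and lower indices: s^{m_{σ(0)},…,m_{σ(k)}}_{i_{σ(0)},…,i_{σ(k)}} = sign(σ) · s^{m_0,…,m_k}_{i_0,…,i_k} for all σ ∈ S_{k+1}. -/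
/-- A tuple `(m_0,…,m_k)` of natural numbers whose non-increasing rearrangement
`(μ_0,…,μ_k)` satisfies `μ_0 − μ_1 = 1`. -/
def gapOne (k : ℕ) (m : Fin (k + 1) → ℕ) : Prop :=
  ∃ σ : Equiv.Perm (Fin (k + 1)), Antitone (fun j => m (σ j)) ∧ m (σ 0) = m (σ 1) + 1

namespace Aux12
open MvPolynomial

variable {F : Type*} [Field F]

lemma d_zero {d : F → F} (hd : IsDerivation d) : d 0 = 0 := by
  have := hd.map_add 0 0
  simpa using this

/-- additive map from a family of additive maps on coefficients -/
noncomputable def lift {A : Type*} [AddCommGroup A] {k : ℕ} (h : (Fin k →₀ ℕ) → F →+ A) :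
    MvPolynomial (Fin k) F →+ A where
  toFun Q := ∑ m ∈ Q.support, h m (coeff m Q)
  map_zero' := by simp
  map_add' P Q := by
    classical
    have key : ∀ (R : MvPolynomial (Fin k) F) (s : Finset (Fin k →₀ ℕ)), R.support ⊆ s →
        ∑ m ∈ R.support, h m (coeff m R) = ∑ m ∈ s, h m (coeff m R) := by
      intro R s hs
      apply Finset.sum_subset hs
      intro x _ hx
      rw [MvPolynomial.notMem_support_iff.mp hx, map_zero]
    rw [key (P + Q) (P.support ∪ Q.support) MvPolynomial.support_add,
      key P _ Finset.subset_union_left, key Q _ Finset.subset_union_right,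
      ← Finset.sum_add_distrib]
    simp

lemma lift_apply {A : Type*} [AddCommGroup A] {k : ℕ} (h : (Fin k →₀ ℕ) → F →+ A)
    (Q : MvPolynomial (Fin k) F) : lift h Q = ∑ m ∈ Q.support, h m (coeff m Q) := rfl

lemma lift_monomial {A : Type*} [AddCommGroup A] {k : ℕ} (h : (Fin k →₀ ℕ) → F →+ A)
    (m : Fin k →₀ ℕ) (f : F) : lift h (monomial m f) = h m f := by
  classical
  rw [lift_apply]
  by_cases hf : f = 0
  · simp [hf]
  · rw [MvPolynomial.support_monomial, if_neg hf]; simp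

/-- the derivation as additive map -/
def dHom {d : F → F} (hd : IsDerivation d) : F →+ F where
  toFun := d
  map_zero' := d_zero hd
  map_add' := hd.map_add

/-- coeffDer as additive map -/
noncomputable def cD {d : F → F} (hd : IsDerivation d) (k : ℕ) :
    MvPolynomial (Fin k) F →+ MvPolynomial (Fin k) F :=
  lift fun m => ((monomial m : F →ₗ[F] _).toAddMonoidHom).comp (dHom hd)

lemma cD_eq {d : F → F} (hd : IsDerivation d) {k : ℕ} (Q : MvPolynomial (Fin k) F) :
    coeffDer d Q = cD hd k Q := rfl

lemma cD_monomial {d : F → F} (hd : IsDerivation d) {k : ℕ} (m : Fin k →₀ ℕ) (f : F) :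
    cD hd k (monomial m f) = monomial m (d f) := by
  rw [cD, lift_monomial]; rfl

/-- E -/
noncomputable def eH {d : F → F} (hd : IsDerivation d) (k : ℕ) :
    MvPolynomial (Fin k) F →+ MvPolynomial (Fin k) F :=
  AddMonoidHom.mulLeft (∑ a : Fin k, X a) + cD hd k

lemma eH_apply {d : F → F} (hd : IsDerivation d) {k : ℕ} (Q : MvPolynomial (Fin k) F) :
    eH hd k Q = (∑ a : Fin k, X a) * Q + cD hd k Q := rfl

lemma X_mul_monomial {k : ℕ} (a : Fin k) (m : Fin k →₀ ℕ) (f : F) :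
    (X a : MvPolynomial (Fin k) F) * monomial m f = monomial (m + Finsupp.single a 1) f := by
  rw [X, monomial_mul, one_mul, add_comm]

lemma eH_monomial {d : F → F} (hd : IsDerivation d) {k : ℕ} (m : Fin k →₀ ℕ) (f : F) :
    eH hd k (monomial m f) =
      ∑ a, monomial (m + Finsupp.single a 1) f + monomial m (d f) := by
  rw [eH_apply, cD_monomial, Finset.sum_mul]
  simp only [X_mul_monomial]

/-- Λ₀ -/
noncomputable def lH {d : F → F} (hd : IsDerivation d) (k : ℕ) :
    AddMonoid.End (MvPolynomial (Fin k) F) := -(eH hd k)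

lemma lH_apply {d : F → F} (hd : IsDerivation d) {k : ℕ} (Q : MvPolynomial (Fin k) F) :
    lH hd k Q = -((∑ a : Fin k, X a) * Q + cD hd k Q) := rfl

lemma lH_eq {d : F → F} (hd : IsDerivation d) (k : ℕ) :
    (lamZero d : MvPolynomial (Fin k) F → _) = lH hd k := by
  funext Q
  rw [lH_apply, lamZero, cD_eq hd]; ring

lemma lH_iter {d : F → F} (hd : IsDerivation d) (k n : ℕ) (Q : MvPolynomial (Fin k) F) :
    (lamZero d)^[n] Q = (lH hd k ^ n) Q := by
  rw [lH_eq hd, AddMonoid.End.coe_pow]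

lemma End_mul {A : Type*} [AddCommGroup A] (f g : AddMonoid.End A) (x : A) :
    (f * g) x = f (g x) := rfl

/-- tail of exponent -/
noncomputable def tl {k : ℕ} (m : Fin (k+1) →₀ ℕ) : Fin k →₀ ℕ :=
  Finsupp.equivFunOnFinite.symm fun a => m a.succ

@[simp] lemma tl_apply {k : ℕ} (m : Fin (k+1) →₀ ℕ) (a : Fin k) : tl m a = m a.succ := rfl

/-- Φ -/
noncomputable def Phi {d : F → F} (hd : IsDerivation d) (k : ℕ) :
    MvPolynomial (Fin (k+1)) F →+ MvPolynomial (Fin k) F :=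
  lift fun m => (show MvPolynomial (Fin k) F →+ MvPolynomial (Fin k) F from
    lH hd k ^ (m 0)).comp ((monomial (tl m) : F →ₗ[F] _).toAddMonoidHom)

lemma Phi_monomial {d : F → F} (hd : IsDerivation d) {k : ℕ} (m : Fin (k+1) →₀ ℕ) (f : F) :
    Phi hd k (monomial m f) = (lH hd k ^ (m 0)) (monomial (tl m) f) := by
  rw [Phi, lift_monomial]; rfl

lemma Phi_eH {d : F → F} (hd : IsDerivation d) {k : ℕ} (Q : MvPolynomial (Fin (k+1)) F) :
    Phi hd k (eH hd (k+1) Q) = 0 := by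
  induction Q using MvPolynomial.induction_on' with
  | monomial m f =>
    rw [eH_monomial, map_add, map_sum, Fin.sum_univ_succ]
    simp only [Phi_monomial]
    have h1 : tl (m + Finsupp.single 0 1) = tl m := by
      ext a; simp
    have h2 : ∀ a : Fin k, tl (m + Finsupp.single a.succ 1) = tl m + Finsupp.single a 1 := by
      intro a; ext b; simp [Finsupp.single_apply]
    have h3 : ∀ a : Fin k, (m + Finsupp.single a.succ 1 : Fin (k+1) →₀ ℕ) 0 = m 0 := by
      intro a; simp
    simp only [h1, h2, h3]
    rw [← map_sum, Finsupp.add_apply, Finsupp.single_eq_same, pow_succ, End_mul,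
      ← map_add, ← map_add, lH_apply, ← eH_apply, eH_monomial]
    convert map_zero (lH hd k ^ (m 0)) using 2
    abel
  | add P Q hP hQ => rw [map_add, map_add, hP, hQ, add_zero]

/-- inclusion -/
noncomputable def inc (k : ℕ) : MvPolynomial (Fin k) F →ₐ[F] MvPolynomial (Fin (k+1)) F :=
  rename Fin.succ

lemma inc_monomial {k : ℕ} (m : Fin k →₀ ℕ) (f : F) :
    inc k (monomial m f) = monomial (m.mapDomain Fin.succ) f := by
  rw [inc, rename_monomial]

lemma tl_map {k : ℕ} (m : Fin k →₀ ℕ) : tl (m.mapDomain Fin.succ) = m := by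
  ext a
  rw [tl_apply, Finsupp.mapDomain_apply (Fin.succ_injective k)]

lemma map_zero' {k : ℕ} (m : Fin k →₀ ℕ) : (m.mapDomain Fin.succ) 0 = 0 := by
  rw [Finsupp.mapDomain_of_notMem_range]
  rintro ⟨a, ha⟩
  exact Fin.succ_ne_zero a ha

lemma Phi_inc {d : F → F} (hd : IsDerivation d) {k : ℕ} (Q : MvPolynomial (Fin k) F) :
    Phi hd k (inc k Q) = Q := by
  induction Q using MvPolynomial.induction_on' with
  | monomial m f =>
    rw [inc_monomial, Phi_monomial, tl_map, map_zero', pow_zero]; rfl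
  | add P Q hP hQ => rw [map_add, map_add, hP, hQ]

lemma cD_rename {d : F → F} (hd : IsDerivation d) {k n : ℕ} (g : Fin k → Fin n)
    (Q : MvPolynomial (Fin k) F) : cD hd n (rename g Q) = rename g (cD hd k Q) := by
  induction Q using MvPolynomial.induction_on' with
  | monomial m f =>
    rw [rename_monomial, cD_monomial, cD_monomial, rename_monomial]
  | add P Q hP hQ => rw [map_add, map_add, hP, hQ, map_add, map_add]

lemma cD_X {d : F → F} (hd : IsDerivation d) {k : ℕ} (a : Fin k)
    (Q : MvPolynomial (Fin k) F) : cD hd k (X a * Q) = X a * cD hd k Q := by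
  induction Q using MvPolynomial.induction_on' with
  | monomial m f =>
    rw [X_mul_monomial, cD_monomial, cD_monomial, X_mul_monomial]
  | add P Q hP hQ => rw [mul_add, map_add, hP, hQ, map_add, mul_add]

lemma eH_rename {d : F → F} (hd : IsDerivation d) {k : ℕ} (g : Equiv.Perm (Fin k))
    (Q : MvPolynomial (Fin k) F) : eH hd k (rename g Q) = rename g (eH hd k Q) := by
  rw [eH_apply, eH_apply, cD_rename, map_add, map_mul, map_sum]
  simp only [rename_X]
  rw [Equiv.sum_comp g (fun a => (X a : MvPolynomial (Fin k) F))]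

lemma eH_X {d : F → F} (hd : IsDerivation d) {k : ℕ} (a : Fin k)
    (Q : MvPolynomial (Fin k) F) : eH hd k (X a * Q) = X a * eH hd k Q := by
  rw [eH_apply, eH_apply, cD_X]; ring

lemma range_rename {d : F → F} (hd : IsDerivation d) {k : ℕ} (g : Equiv.Perm (Fin k))
    {Q : MvPolynomial (Fin k) F} (h : Q ∈ (eH hd k).range) : rename g Q ∈ (eH hd k).range := by
  obtain ⟨R, rfl⟩ := h
  exact ⟨rename g R, eH_rename hd g R⟩

lemma inc_lH {d : F → F} (hd : IsDerivation d) {k : ℕ} (R : MvPolynomial (Fin k) F) :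
    inc k (lH hd k R) = X 0 * inc k R - eH hd (k+1) (inc k R) := by
  rw [lH_apply, eH_apply, inc, cD_rename, Fin.sum_univ_succ, map_neg, map_add, map_mul, map_sum]
  simp only [rename_X]
  ring

lemma inc_iter {d : F → F} (hd : IsDerivation d) {k : ℕ} (n : ℕ) (R : MvPolynomial (Fin k) F) :
    X 0 ^ n * inc k R - inc k ((lH hd k ^ n) R) ∈ (eH hd (k+1)).range := by
  induction n with
  | zero => simp
  | succ n ih =>
    obtain ⟨P, hP⟩ := ih
    rw [pow_succ' (lH hd k), End_mul, inc_lH]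
    refine ⟨X 0 * P + inc k ((lH hd k ^ n) R), ?_⟩
    rw [map_add, eH_X, hP]
    ring

lemma sub_inc_Phi {d : F → F} (hd : IsDerivation d) {k : ℕ} (Q : MvPolynomial (Fin (k+1)) F) :
    Q - inc k (Phi hd k Q) ∈ (eH hd (k+1)).range := by
  induction Q using MvPolynomial.induction_on' with
  | monomial m f =>
    rw [Phi_monomial]
    convert inc_iter hd (m 0) (monomial (tl m) f) using 2
    rw [inc_monomial, X_pow_eq_monomial, monomial_mul, one_mul]
    congr 2
    ext j
    refine Fin.cases ?_ (fun a => ?_) j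
    · simp [map_zero']
    · rw [Finsupp.add_apply, Finsupp.mapDomain_apply (Fin.succ_injective k)]
      simp
  | add P Q hP hQ =>
    rw [map_add, map_add]
    convert add_mem hP hQ using 1
    ring

lemma Phi_rename {d : F → F} (hd : IsDerivation d) {k : ℕ} (σ : Equiv.Perm (Fin (k+1)))
    (P Q : MvPolynomial (Fin (k+1)) F) (h : P - Q ∈ (eH hd (k+1)).range) :
    Phi hd k (rename σ P) = Phi hd k (rename σ Q) := by
  obtain ⟨R, hR⟩ := range_rename hd σ h
  rw [← sub_eq_zero, ← map_sub, ← map_sub, ← hR, Phi_eH]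

/-- equivariance of S -/
def Pr {d : F → F} (hd : IsDerivation d) {k l : ℕ}
    (S : (Fin (k + 1) → Fin l) → MvPolynomial (Fin k) F) (σ : Equiv.Perm (Fin (k+1))) : Prop :=
  ∀ i, Phi hd k (rename σ (inc k (S (fun j => i (σ j))))) = (Equiv.Perm.sign σ : ℤ) • S i

lemma Pr_mul {d : F → F} (hd : IsDerivation d) {k l : ℕ}
    (S : (Fin (k + 1) → Fin l) → MvPolynomial (Fin k) F) (σ τ : Equiv.Perm (Fin (k+1)))
    (h1 : Pr hd S σ) (h2 : Pr hd S τ) : Pr hd S (σ * τ) := by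
  intro i
  have e1 := h2 (fun j => i (σ j))
  have e2 := Phi_rename hd σ _ _
    (sub_inc_Phi hd (rename τ (inc k (S (fun j => i (σ (τ j)))))))
  rw [rename_rename, e1, map_zsmul, map_zsmul, map_zsmul, h1 i, smul_smul] at e2
  rw [Equiv.Perm.coe_mul]
  simp only [Function.comp_apply]
  rw [e2, Equiv.Perm.sign_mul, mul_comm]
  simp

lemma Pr_fix {d : F → F} (hd : IsDerivation d) {k l : ℕ}
    (S : (Fin (k + 1) → Fin l) → MvPolynomial (Fin k) F) (hS : IsSkewsym S)
    (e : Equiv.Perm (Fin k)) : Pr hd S (Equiv.Perm.decomposeFin.symm (0, e)) := by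
  intro i
  have h1 : (fun j => i (Equiv.Perm.decomposeFin.symm (0, e) j))
      = Fin.cons (i 0) (fun a => i (Fin.succ (e a))) := by
    funext j
    refine Fin.cases ?_ (fun a => ?_) j
    · simp
    · simp
  have h2 : ∀ Q : MvPolynomial (Fin k) F,
      rename (Equiv.Perm.decomposeFin.symm (0, e)) (inc k Q) = inc k (rename e Q) := by
    intro Q
    rw [inc, rename_rename, rename_rename]
    congr 2
  rw [h1, h2, hS e i, Phi_inc]
  rw [Equiv.Perm.decomposeFin.symm_sign]; simp

lemma Pr_swap {d : F → F} (hd : IsDerivation d) {k l : ℕ}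
    (S : (Fin (k + 1) → Fin l) → MvPolynomial (Fin k) F)
    (hS : ∀ (α : Fin k) (i : Fin (k + 1) → Fin l), tauAct d α S i = - S i)
    (α : Fin k) : Pr hd S (Equiv.swap 0 α.succ) := by
  intro i
  have := hS α i
  rw [Equiv.Perm.sign_swap (Fin.succ_ne_zero α).symm]
  simp only [Units.val_neg, Units.val_one, neg_smul, one_smul]
  rw [← this, tauAct]
  set Q := S (fun j => i (Equiv.swap 0 α.succ j))
  conv_lhs => rw [← support_sum_monomial_coeff Q]
  rw [map_sum, map_sum, map_sum]
  refine Finset.sum_congr rfl fun m _ => ?_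
  rw [inc_monomial, rename_monomial, Phi_monomial, lH_iter hd]
  have key : ∀ j, (Finsupp.mapDomain (Equiv.swap 0 α.succ) (Finsupp.mapDomain Fin.succ m)) j
      = (Finsupp.mapDomain Fin.succ m) (Equiv.swap 0 α.succ j) := by
    intro j
    obtain ⟨j, rfl⟩ := (Equiv.swap 0 α.succ).surjective j
    rw [Finsupp.mapDomain_apply (Equiv.injective _)]
    simp
  have h0 := key 0
  rw [Equiv.swap_apply_left, Finsupp.mapDomain_apply (Fin.succ_injective k)] at h0
  rw [h0]
  congr 3
  ext a
  rw [tl_apply, key]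
  by_cases h : a = α
  · subst h; simp [map_zero']
  · rw [Equiv.swap_apply_of_ne_of_ne (Fin.succ_ne_zero a) (by simpa using h),
      Finsupp.mapDomain_apply (Fin.succ_injective k), Finsupp.erase_ne h]

lemma Pr_all {d : F → F} (hd : IsDerivation d) {k l : ℕ}
    (S : (Fin (k + 1) → Fin l) → MvPolynomial (Fin k) F) (hS : IsSkewsym S)
    (hS' : ∀ (α : Fin k) (i : Fin (k + 1) → Fin l), tauAct d α S i = - S i)
    (σ : Equiv.Perm (Fin (k+1))) : Pr hd S σ := by
  obtain ⟨⟨p, e⟩, rfl⟩ := Equiv.Perm.decomposeFin.symm.surjective σ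
  have : Equiv.Perm.decomposeFin.symm (p, e) =
      Equiv.swap 0 p * Equiv.Perm.decomposeFin.symm (0, e) := by
    ext j
    refine Fin.cases ?_ (fun a => ?_) j <;> simp
  rw [this]
  refine Fin.cases ?_ (fun α => ?_) p
  · rw [Equiv.swap_self]; exact Pr_fix hd S hS e
  · exact Pr_mul hd S _ _ (Pr_swap hd S hS' α) (Pr_fix hd S hS e)

end Aux12
namespace Aux12
open MvPolynomial
variable {F : Type*} [Field F]

/-- gap-one condition -/
def gap' {k : ℕ} (m : Fin (k+1) → ℕ) : Prop :=
  ∃ p q, p ≠ q ∧ m p = m q + 1 ∧ ∀ j, j ≠ p → m j ≤ m q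

lemma gap'_gapOne {k : ℕ} {m : Fin (k+1) → ℕ} (h : gap' m) : gapOne k m := by
  obtain ⟨p, q, hpq, h1, h2⟩ := h
  obtain ⟨k, rfl⟩ : ∃ n, k = n + 1 := by
    rcases k with _ | k
    · exact absurd (Fin.ext (by omega)) hpq
    · exact ⟨k, rfl⟩
  set σ : Equiv.Perm (Fin (k+1+1)) := Fin.revPerm.trans (Tuple.sort m) with hσ
  have hanti : Antitone (fun j => m (σ j)) := by
    intro a b hab
    exact Tuple.monotone_sort m (Fin.rev_le_rev.mpr hab)
  have hp : σ 0 = p := by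
    by_contra hne
    have e1 := hanti (Fin.zero_le (σ.symm p))
    simp only [Equiv.apply_symm_apply] at e1
    have := h2 _ hne
    omega
  have hq0 : σ.symm q ≠ 0 := by
    intro h
    rw [Equiv.symm_apply_eq, hp] at h
    exact hpq h.symm
  have h01 : (1 : Fin (k+1+1)) ≤ σ.symm q := by
    exact Fin.one_le_of_ne_zero hq0
  refine ⟨σ, hanti, ?_⟩
  have e1 := hanti h01
  simp only [Equiv.apply_symm_apply] at e1
  have e2 : σ 1 ≠ p := by
    rw [← hp]; intro h; simpa using σ.injective h
  have := h2 _ e2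
  rw [hp]; omega

/-- span of gap-one monomials -/
def G (F : Type*) [Field F] (k : ℕ) : AddSubgroup (MvPolynomial (Fin (k+1)) F) where
  carrier := {Q | ∀ m : Fin (k+1) →₀ ℕ, ¬ gap' m → coeff m Q = 0}
  zero_mem' := by intro m _; simp
  add_mem' := by
    intro a b ha hb m hm
    rw [coeff_add, ha m hm, hb m hm, add_zero]
  neg_mem' := by
    intro a ha m hm
    rw [coeff_neg, ha m hm, neg_zero]

lemma mem_G {k : ℕ} (Q : MvPolynomial (Fin (k+1)) F) :
    Q ∈ G F k ↔ ∀ m : Fin (k+1) →₀ ℕ, ¬ gap' m → coeff m Q = 0 := Iff.rfl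

lemma mon_mem_G {k : ℕ} (m : Fin (k+1) →₀ ℕ) (f : F) (h : gap' m) : monomial m f ∈ G F k := by
  classical
  intro n hn
  rw [coeff_monomial, if_neg]
  rintro rfl
  exact hn h

lemma red {d : F → F} (hd : IsDerivation d) (hsurj : Function.Surjective d) {k : ℕ} (hk : 1 ≤ k)
    (N : ℕ) : ∀ (D : ℕ) (m : Fin (k+1) →₀ ℕ) (f : F), (∀ j, m j ≤ N) → ∑ j, (N - m j) = D →
      monomial m f ∈ G F k ⊔ (eH hd (k+1)).range := by
  induction N using Nat.strong_induction_on with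
  | _ N ihN =>
  intro D
  induction D using Nat.strong_induction_on with
  | _ D ih =>
  intro m f hm hD
  obtain ⟨p, -, hp⟩ := Finset.exists_max_image Finset.univ m Finset.univ_nonempty
  have hne : (Finset.univ.erase p).Nonempty := by
    rw [← Finset.card_pos, Finset.card_erase_of_mem (Finset.mem_univ _)]
    simp; omega
  obtain ⟨q, hq, hq'⟩ := Finset.exists_max_image (Finset.univ.erase p) m hne
  simp only [Finset.mem_erase, Finset.mem_univ, and_true, true_implies] at hp hq hq'
  have hE : ∀ Q, eH hd (k+1) Q ∈ G F k ⊔ (eH hd (k+1)).range := fun Q =>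
    AddSubgroup.mem_sup_right ⟨Q, rfl⟩
  have hqp := hp q
  obtain h0 | h1 | h2 : m p = m q ∨ m p = m q + 1 ∨ m q + 2 ≤ m p := by omega
  · obtain ⟨g, rfl⟩ := hsurj f
    have e : monomial m (d g) = eH hd (k+1) (monomial m g)
        - ∑ a, monomial (m + Finsupp.single a 1) g := by
      rw [eH_monomial]; abel
    rw [e]
    refine sub_mem (hE _) (sum_mem fun a _ => ?_)
    by_cases ha : m a = m p
    · refine AddSubgroup.mem_sup_left (mon_mem_G _ _ ?_)
      obtain ⟨b, hb, hb'⟩ : ∃ b, a ≠ b ∧ m b = m p := by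
        by_cases h : a = p
        · exact ⟨q, by rw [h]; exact hq.symm, h0.symm⟩
        · exact ⟨p, h, rfl⟩
      refine ⟨a, b, hb, ?_, fun j hj => ?_⟩
      · simp [hb]; omega
      · have := hp j
        simp [hb, hj.symm]; omega
    · have := hp a
      refine ih _ ?_ _ g (fun j => ?_) rfl
      · rw [← hD]
        apply Finset.sum_lt_sum
        · intro j _
          rw [Finsupp.add_apply]; omega
        · refine ⟨a, Finset.mem_univ _, ?_⟩
          have := hm p
          simp; omega
      · have := hm j
        have := hm p
        by_cases hj : a = j
        · subst hj; simp; omega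
        · simp [hj]; omega
  · exact AddSubgroup.mem_sup_left (mon_mem_G _ _ ⟨p, q, hq.symm, h1, fun j hj => hq' j hj⟩)
  · have hN := hm p
    obtain ⟨n, rfl⟩ : ∃ n, m = n + Finsupp.single p 1 := by
      refine ⟨m - Finsupp.single p 1, ?_⟩
      rw [tsub_add_cancel_of_le]
      rw [Finsupp.single_le_iff]; omega
    have hn : ∀ j, n j ≤ N - 1 ∧ (j ≠ p → n j + 1 ≤ N - 1) := by
      intro j
      by_cases hj : p = j
      · subst hj; simp at hN ⊢; omega
      · have := hq' j (Ne.symm hj)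
        simp [hj, hq] at this h2 hN ⊢
        omega
    have e : monomial (n + Finsupp.single p 1) f = eH hd (k+1) (monomial n f)
        - ∑ a ∈ Finset.univ.erase p, monomial (n + Finsupp.single a 1) f - monomial n (d f) := by
      rw [eH_monomial, ← Finset.add_sum_erase _ _ (Finset.mem_univ p)]; abel
    rw [e]
    refine sub_mem (sub_mem (hE _) (sum_mem fun a ha => ?_)) ?_
    · refine ihN (N-1) (by omega) _ _ f (fun j => ?_) rfl
      have := (hn a).2 (Finset.ne_of_mem_erase ha)
      by_cases hj : a = j
      · subst hj; simpa using this
      · simpa [hj] using (hn j).1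
    · exact ihN (N-1) (by omega) _ _ _ (fun j => (hn j).1) rfl

lemma red' {d : F → F} (hd : IsDerivation d) (hsurj : Function.Surjective d) {k : ℕ} (hk : 1 ≤ k)
    (Q : MvPolynomial (Fin (k+1)) F) : ∃ g ∈ G F k, Q - g ∈ (eH hd (k+1)).range := by
  have : Q ∈ G F k ⊔ (eH hd (k+1)).range := by
    induction Q using MvPolynomial.induction_on' with
    | monomial m f =>
      refine red hd hsurj hk (∑ j, m j) _ m f (fun j => ?_) rfl
      exact Finset.single_le_sum (f := fun j => m j) (fun _ _ => Nat.zero_le _) (Finset.mem_univ j)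
    | add P Q hP hQ => exact add_mem hP hQ
  obtain ⟨g, hg, r, hr, rfl⟩ := AddSubgroup.mem_sup.mp this
  exact ⟨g, hg, by simpa using hr⟩

lemma coeff_rename_perm {k : ℕ} (σ : Equiv.Perm (Fin k)) (Q : MvPolynomial (Fin k) F)
    (m n : Fin k →₀ ℕ) (h : ∀ j, n j = m (σ j)) : coeff m (rename σ Q) = coeff n Q := by
  have : m = n.mapDomain σ := by
    ext j
    obtain ⟨j, rfl⟩ := σ.surjective j
    rw [Finsupp.mapDomain_apply σ.injective, h]
  rw [this, coeff_rename_mapDomain _ σ.injective]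

lemma G_rename {k : ℕ} (σ : Equiv.Perm (Fin (k+1))) {Q : MvPolynomial (Fin (k+1)) F}
    (h : Q ∈ G F k) : rename σ Q ∈ G F k := by
  intro m hm
  rw [coeff_rename_perm σ Q m (Finsupp.equivFunOnFinite.symm fun j => m (σ j)) (fun j => rfl)]
  apply h
  rintro ⟨p, q, hpq, h1, h2⟩
  refine hm ⟨σ p, σ q, fun h => hpq (σ.injective h), h1, fun j hj => ?_⟩
  have := h2 (σ.symm j) (fun h => hj (by rw [← h]; simp))
  simpa using this

lemma exists_B [CharZero F] {d : F → F} (hd : IsDerivation d) (hsurj : Function.Surjective d)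
    {k l : ℕ} (hk : 1 ≤ k)
    (S : (Fin (k + 1) → Fin l) → MvPolynomial (Fin k) F) (hS : IsSkewsym S)
    (hS' : ∀ (α : Fin k) (i : Fin (k + 1) → Fin l), tauAct d α S i = - S i) :
    ∃ B : (Fin (k + 1) → Fin l) → MvPolynomial (Fin (k+1)) F,
      (∀ i, B i ∈ G F k) ∧ (∀ i, Phi hd k (B i) = S i) ∧
      ∀ (τ : Equiv.Perm (Fin (k+1))) i,
        rename τ (B (fun j => i (τ j))) = (Equiv.Perm.sign τ : ℤ) • B i := by
  choose g hg hg' using fun i => red' hd hsurj hk (inc k (S i))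
  -- divide S beforehand to avoid dividing afterwards
  set c : ℕ := Fintype.card (Equiv.Perm (Fin (k+1))) with hc
  have hc0 : (c : F) ≠ 0 := by
    rw [hc]; exact_mod_cast Fintype.card_ne_zero
  set A : (Fin (k + 1) → Fin l) → MvPolynomial (Fin (k+1)) F := fun i =>
    ∑ σ : Equiv.Perm (Fin (k+1)), (Equiv.Perm.sign σ : ℤ) • rename σ (g (fun j => i (σ j))) with hA
  have hAG : ∀ i, A i ∈ G F k := fun i =>
    sum_mem fun σ _ => zsmul_mem (G_rename σ (hg _)) _
  have hPA : ∀ i, Phi hd k (A i) = c • S i := by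
    intro i
    rw [hA]
    simp only [map_sum, map_zsmul]
    rw [hc, ← Finset.card_univ, ← Finset.sum_const]
    refine Finset.sum_congr rfl fun σ _ => ?_
    rw [← Phi_rename hd σ _ _ (hg' _), Pr_all hd S hS hS' σ i, smul_smul]
    rcases Int.units_eq_one_or (Equiv.Perm.sign σ) with h | h <;> simp [h]
  have hAs : ∀ (τ : Equiv.Perm (Fin (k+1))) i,
        rename τ (A (fun j => i (τ j))) = (Equiv.Perm.sign τ : ℤ) • A i := by
    intro τ i
    rw [hA]
    simp only [map_sum, map_zsmul, rename_rename]
    rw [Finset.smul_sum]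
    conv_rhs => rw [← Equiv.sum_comp (Equiv.mulLeft τ)]
    refine Finset.sum_congr rfl fun σ _ => ?_
    simp only [Equiv.coe_mulLeft, Equiv.Perm.coe_mul, smul_smul, Function.comp_apply]
    congr 1
    rw [Equiv.Perm.sign_mul]
    rcases Int.units_eq_one_or (Equiv.Perm.sign τ) with h | h <;> simp [h]
  refine ⟨fun i => (c : F)⁻¹ • A i, fun i m hm => ?_, fun i => ?_, fun τ i => ?_⟩
  · rw [coeff_smul, hAG i m hm, smul_zero]
  · have h1 : (c : F) • Phi hd k ((c : F)⁻¹ • A i) = (c : F) • S i := by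
      rw [Nat.cast_smul_eq_nsmul, Nat.cast_smul_eq_nsmul, ← map_nsmul, ← hPA,
        ← Nat.cast_smul_eq_nsmul F, smul_smul, mul_inv_cancel₀ hc0, one_smul]
    exact smul_right_injective _ hc0 h1
  · rw [map_smul, hAs, smul_comm]

lemma Phi_sum {d : F → F} (hd : IsDerivation d) {k : ℕ} (B : MvPolynomial (Fin (k+1)) F) (M : ℕ)
    (hM : B.totalDegree ≤ M) :
    Phi hd k B = ∑ m : Fin (k + 1) → Fin (M + 1),
      (lamZero d)^[(m 0 : ℕ)]
        ((MvPolynomial.monomial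
            (Finsupp.equivFunOnFinite.symm fun a : Fin k => (m a.succ : ℕ)))
          (coeff (Finsupp.equivFunOnFinite.symm fun j => (m j : ℕ)) B)) := by
  have hb : ∀ n ∈ B.support, ∀ j, n j < M + 1 := by
    intro n hn j
    have h1 := monomial_le_degreeOf j hn
    have h2 := degreeOf_le_totalDegree B j
    omega
  have hb' : ∀ n ∈ B.support, ∀ j, ((Fin.ofNat (M+1) (n j) : Fin (M+1)) : ℕ) = n j := by
    intro n hn j
    simp [Nat.mod_eq_of_lt (hb n hn j)]
  rw [Phi, lift_apply]
  refine Finset.sum_of_injOn (fun n j => Fin.ofNat (M+1) (n j)) ?_ (fun _ _ => by simp) ?_ ?_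
  · intro n hn n' hn' h
    ext j
    rw [← hb' n hn j, ← hb' n' hn' j]
    exact congrArg Fin.val (congrFun h j)
  · intro m _ hm
    have : coeff (Finsupp.equivFunOnFinite.symm fun j => (m j : ℕ)) B = 0 := by
      by_contra hne
      refine hm ⟨_, mem_support_iff.mpr hne, ?_⟩
      funext j
      apply Fin.ext
      rw [hb' _ (mem_support_iff.mpr hne)]
      rfl
    rw [this, lH_iter hd]
    simp
  · intro n hn
    have e1 : (Finsupp.equivFunOnFinite.symm fun j =>
        ((Fin.ofNat (M+1) (n j) : Fin (M+1)) : ℕ)) = n := by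
      ext j; exact hb' n hn j
    have e2 : (Finsupp.equivFunOnFinite.symm fun a : Fin k =>
        ((Fin.ofNat (M+1) (n a.succ) : Fin (M+1)) : ℕ)) = tl n := by
      ext j; exact hb' n hn j.succ
    rw [lH_iter hd, e1, e2, hb' n hn]
    rfl

end Aux12

/-- Let `F` be a differential field of characteristic zero with surjective derivation
`d`, and let `k ≥ 1`.  Every totally skewsymmetric `k`-differential operator `S` on `F^ℓ`
admits a decomposition
`S_{i_0,…,i_k} = Σ_{(m_0,…,m_k)} Λ₀^{m_0} (λ_1^{m_1}⋯λ_k^{m_k} · s^{m_0,…,m_k}_{i_0,…,i_k})`,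
where the sum ranges over tuples in `{0,…,M}^{k+1}` whose non-increasing rearrangement
satisfies `μ_0 − μ_1 = 1`, and the coefficients `s` are skewsymmetric with respect to
simultaneous permutations of the upper and lower indices. -/
theorem stmt_12 (F : Type*) [Field F] [CharZero F] (d : F → F) (hd : IsDerivation d)
    (hsurj : Function.Surjective d)
    (k l : ℕ) (hk : 1 ≤ k) (hl : 0 < l)
    (S : (Fin (k + 1) → Fin l) → MvPolynomial (Fin k) F)
    (hSskew : IsSkewsym S)
    (hStot : ∀ (α : Fin k) (i : Fin (k + 1) → Fin l), tauAct d α S i = - S i) :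
    ∃ (M : ℕ) (s : (Fin (k + 1) → ℕ) → (Fin (k + 1) → Fin l) → F),
      (∀ m i, ¬ gapOne k m → s m i = 0) ∧
      (∀ (σ : Equiv.Perm (Fin (k + 1))) (m : Fin (k + 1) → ℕ) (i : Fin (k + 1) → Fin l),
        s (fun j => m (σ j)) (fun j => i (σ j)) = (Equiv.Perm.sign σ : ℤ) • s m i) ∧
      (∀ i : Fin (k + 1) → Fin l,
        S i = ∑ m : Fin (k + 1) → Fin (M + 1),
          (lamZero d)^[(m 0 : ℕ)]
            ((MvPolynomial.monomial
                (Finsupp.equivFunOnFinite.symm fun a : Fin k => (m a.succ : ℕ)))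
              (s (fun j => (m j : ℕ)) i))) := by
  obtain ⟨B, hG, hP, hs⟩ := Aux12.exists_B hd hsurj hk S hSskew hStot
  refine ⟨∑ i, (B i).totalDegree,
    fun m i => MvPolynomial.coeff (Finsupp.equivFunOnFinite.symm m) (B i), ?_, ?_, ?_⟩
  · intro m i hm
    exact hG i _ (fun h => hm (Aux12.gap'_gapOne h))
  · intro σ m i
    have h := congrArg (MvPolynomial.coeff (Finsupp.equivFunOnFinite.symm m)) (hs σ i)
    rw [Aux12.coeff_rename_perm σ _ _ (Finsupp.equivFunOnFinite.symm fun j => m (σ j))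
      (fun j => rfl)] at h
    beta_reduce
    rw [h, MvPolynomial.coeff_smul]
  · intro i
    rw [← hP i]
    exact Aux12.Phi_sum hd (B i) _
      (Finset.single_le_sum (f := fun i => (B i).totalDegree) (fun _ _ => Nat.zero_le _)
        (Finset.mem_univ i))
end
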